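/- Let n ≥ 2, let 1 ≤ k ≤ n−1, and let f₁, f₂ ∈ Q₀ⁿ. Assume the Shephard condition: ‖P_H f₁‖_{L¹(H)} ≤ ‖P_H f₂‖_{L¹(H)} for every k-dimensional linear subspace H ⊆ ℝⁿ. Then ‖f₁‖_{n/k} ≤ (16·e·√n)^{n−k} · ‖f₂‖_{n/k}. -/

import Mathlib

open MeasureTheory

noncomputable section

/-- `ℝⁿ` with its Euclidean structure. -/
abbrev Eucl (n : ℕ) := EuclideanSpace ℝ (Fin n)

/-- `f : ℝⁿ → [0,∞)` is log-concave:
`f(tx+(1−t)y) ≥ f(x)^t · f(y)^(1−t)` for all `x, y` and `t ∈ (0,1)`. -/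
def IsLogConcave {n : ℕ} (f : Eucl n → ℝ) : Prop :=
  ∀ x y : Eucl n, ∀ t : ℝ, 0 < t → t < 1 →
    f x ^ t * f y ^ (1 - t) ≤ f (t • x + (1 - t) • y)

/-- The class `Q₀ⁿ`: nonnegative, log-concave, upper semicontinuous, integrable
functions with positive integral. -/
def MemQ0 {n : ℕ} (f : Eucl n → ℝ) : Prop :=
  (∀ x, 0 ≤ f x) ∧ IsLogConcave f ∧ UpperSemicontinuous f ∧
    Integrable f ∧ 0 < ∫ x, f x

/-- `‖f‖_∞ = sup f`. -/
def supNorm {n : ℕ} (f : Eucl n → ℝ) : ℝ := ⨆ x, f x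

/-- `‖f‖_p = (∫ f^p)^(1/p)`. -/
def lpNorm {n : ℕ} (p : ℝ) (f : Eucl n → ℝ) : ℝ := (∫ x, f x ^ p) ^ (1 / p)

/-- `‖P_H f‖_{L¹(H)} = ∫_H sup_{z ∈ H⊥} f(y+z) dλ_H(y)`, the `L¹(H)`-norm of the
projection of `f` onto the subspace `H` (with the Lebesgue measure on `H` induced
by the Euclidean structure). -/
def projL1 {n : ℕ} (f : Eucl n → ℝ) (H : Submodule ℝ (Eucl n)) : ℝ :=
  ∫ y : H, ⨆ z : Hᗮ, f ((y : Eucl n) + (z : Eucl n))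

/-- `‖S_H f‖_{L¹(H)} = ∫_H f dλ_H`, the integral of the section `f|_H`. -/
def sectL1 {n : ℕ} (f : Eucl n → ℝ) (H : Submodule ℝ (Eucl n)) : ℝ :=
  ∫ y : H, f (y : Eucl n)

open scoped ENNReal


/-- supremum over the coordinates in `J`. -/
def supMarg {n : ℕ} (J : Finset (Fin n)) (F : (Fin n → ℝ) → ℝ≥0∞) (x : Fin n → ℝ) : ℝ≥0∞ :=
  ⨆ z : Fin n → ℝ, F (J.piecewise z x)

/-- sup-convolution with the box `[0,t]^s`. -/
def boxSup {n : ℕ} (t : ℝ) (s : Finset (Fin n)) (F : (Fin n → ℝ) → ℝ≥0∞) (x : Fin n → ℝ) : ℝ≥0∞ :=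
  ⨆ u : {u : Fin n → ℝ // ∀ i, 0 ≤ u i ∧ u i ≤ t}, F (x - s.piecewise u.1 0)

lemma piecewise_continuous {n : ℕ} (J : Finset (Fin n)) (z : Fin n → ℝ) :
    Continuous (fun x : Fin n → ℝ => J.piecewise z x) := by
  refine continuous_pi fun i => ?_
  by_cases h : i ∈ J
  · simp only [Finset.piecewise_eq_of_mem _ _ _ h]; fun_prop
  · simp only [Finset.piecewise_eq_of_notMem _ _ _ h]; fun_prop

lemma supMarg_lsc {n : ℕ} (J : Finset (Fin n)) {F : (Fin n → ℝ) → ℝ≥0∞}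
    (hF : LowerSemicontinuous F) : LowerSemicontinuous (supMarg J F) :=
  lowerSemicontinuous_iSup fun z => hF.comp (piecewise_continuous J z)

lemma boxSup_lsc {n : ℕ} (t : ℝ) (s : Finset (Fin n)) {F : (Fin n → ℝ) → ℝ≥0∞}
    (hF : LowerSemicontinuous F) : LowerSemicontinuous (boxSup t s F) :=
  lowerSemicontinuous_iSup fun u => hF.comp (by fun_prop)

/-- one dimensional inequality -/
lemma one_dim_box (φ ψ : ℝ → ℝ≥0∞) (t : ℝ) (ht : 0 ≤ t)
    (h : ∀ b u, 0 ≤ u → u ≤ t → φ (b - u) ≤ ψ b) (a : ℝ) :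
    (∫⁻ b, φ b) + ENNReal.ofReal t * φ a ≤ ∫⁻ b, ψ b := by
  have e1 : ∫⁻ b, ψ b = (∫⁻ b in Set.Iio a, ψ b) + ((∫⁻ b in Set.Ico a (a+t), ψ b) +
      ∫⁻ b in Set.Ici (a+t), ψ b) := by
    rw [← lintegral_union measurableSet_Ici, Set.Ico_union_Ici_eq_Ici (by linarith),
      ← lintegral_union measurableSet_Ici, Set.Iio_union_Ici, setLIntegral_univ]
    · exact Set.disjoint_left.mpr fun x hx hy => by
        simp only [Set.mem_Iio, Set.mem_Ici] at hx hy; linarith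
    · exact Set.disjoint_left.mpr fun x hx hy => by
        simp only [Set.mem_Ico, Set.mem_Ici] at hx hy; linarith [hx.2]
  have e2 : ∫⁻ b, φ b = (∫⁻ b in Set.Iio a, φ b) + ∫⁻ b in Set.Ici a, φ b := by
    rw [← lintegral_union measurableSet_Ici, Set.Iio_union_Ici, setLIntegral_univ]
    exact Set.disjoint_left.mpr fun x hx hy => by
        simp only [Set.mem_Iio, Set.mem_Ici] at hx hy; linarith
  have e3 : ∫⁻ b in Set.Ici a, φ b = ∫⁻ b in Set.Ici (a+t), φ (b - t) := by
    have := (measurePreserving_sub_right (volume : Measure ℝ) t).setLIntegral_comp_preimage_emb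
      (MeasurableEquiv.subRight t).measurableEmbedding φ (Set.Ici a)
    rw [← this]
    congr 2
    ext x; simp
  have e4 : ENNReal.ofReal t * φ a ≤ ∫⁻ b in Set.Ico a (a+t), ψ b := by
    have : ∫⁻ b in Set.Ico a (a+t), φ a = ENNReal.ofReal t * φ a := by
      rw [setLIntegral_const, Real.volume_Ico, mul_comm]; congr 2; ring
    rw [← this]
    refine setLIntegral_mono' measurableSet_Ico fun b hb => ?_
    have := h b (b - a) (by linarith [hb.1]) (by linarith [hb.2])
    simpa using this
  rw [e1, e2, e3, add_assoc, add_comm (∫⁻ b in Set.Ici (a+t), φ (b - t))]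
  gcongr with b b
  · have := h b 0 le_rfl ht; simpa using this
  · exact h _ _ ht le_rfl

lemma boxSup_insert {n : ℕ} (t : ℝ) (s : Finset (Fin n)) (i : Fin n) (hi : i ∉ s)
    (F : (Fin n → ℝ) → ℝ≥0∞) (x : Fin n → ℝ) (b u : ℝ) (hu : 0 ≤ u) (hut : u ≤ t) :
    boxSup t s F (Function.update x i (b - u)) ≤ boxSup t (insert i s) F (Function.update x i b) := by
  refine iSup_le fun v => ?_
  refine le_iSup_of_le ⟨Function.update v.1 i u, fun j => ?_⟩ (le_of_eq ?_)
  · by_cases hj : j = i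
    · subst hj; simp [hu, hut]
    · simp [hj, v.2 j]
  · congr 1
    ext j
    by_cases hj : j = i
    · subst hj; simp [hi]
    · by_cases hjs : j ∈ s
      · simp [hj, hjs]
      · simp [hj, hjs]

lemma supMarg_boxSup {n : ℕ} (t : ℝ) (s : Finset (Fin n)) (i : Fin n) (hi : i ∉ s)
    (F : (Fin n → ℝ) → ℝ≥0∞) (x : Fin n → ℝ) :
    boxSup t s (supMarg {i} F) x = ⨆ a : ℝ, boxSup t s F (Function.update x i a) := by
  unfold boxSup supMarg
  refine le_antisymm
    (iSup_le fun u => iSup_le fun z => le_iSup_of_le (z i) (le_iSup_of_le u (le_of_eq ?_)))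
    (iSup_le fun a => iSup_le fun u => le_iSup_of_le u (le_iSup_of_le (fun _ => a) (le_of_eq ?_)))
  all_goals
    congr 1
    ext j
    by_cases hj : j = i
    · subst hj; simp [hi]
    · simp [hj]

lemma supMarg_supMarg {n : ℕ} (J : Finset (Fin n)) (i : Fin n) (hi : i ∉ J)
    (F : (Fin n → ℝ) → ℝ≥0∞) : supMarg J (supMarg {i} F) = supMarg (insert i J) F := by
  ext x
  unfold supMarg
  refine le_antisymm (iSup_le fun z => iSup_le fun w =>
      le_iSup_of_le (Function.update z i (w i)) (le_of_eq ?_))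
    (iSup_le fun a => le_iSup_of_le a (le_iSup_of_le a (le_of_eq ?_)))
  all_goals
    congr 1
    ext j
    by_cases hj : j = i
    · subst hj; simp
    · by_cases hjs : j ∈ J
      · simp [hj, hjs]
      · simp [hj, hjs]

abbrev vol1 (n : ℕ) : Fin n → Measure ℝ := fun _ => volume

lemma box_expansion {n : ℕ} (t : ℝ) (ht : 0 ≤ t) (s : Finset (Fin n)) :
    ∀ (F : (Fin n → ℝ) → ℝ≥0∞), LowerSemicontinuous F → ∀ x,
    ∑ I ∈ s.powerset, ENNReal.ofReal t ^ (s \ I).card *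
      lmarginal (vol1 n) I (supMarg (s \ I) F) x ≤ lmarginal (vol1 n) s (boxSup t s F) x := by
  induction s using Finset.induction_on with
  | empty =>
    intro F hF x
    have h1 : ∀ u : Fin n → ℝ, (∅ : Finset (Fin n)).piecewise u x = x := by intro u; ext; simp
    simp only [Finset.powerset_empty, Finset.sum_singleton, lmarginal_empty]
    simp only [Finset.sdiff_self, Finset.card_empty, pow_zero, one_mul]
    unfold supMarg boxSup
    refine iSup_le fun u => le_iSup_of_le ⟨0, fun i => by simp [ht]⟩ (le_of_eq ?_)
    congr 1
    ext j; simp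
  | insert i s hi ih =>
    intro F hF x
    have hm1 := (boxSup_lsc t (insert i s) hF).measurable
    have hm2 := (boxSup_lsc t s hF).measurable
    have hPi := supMarg_lsc {i} hF
    have key : ∀ y, (∫⁻ b, boxSup t s F (Function.update y i b)) +
        ENNReal.ofReal t * boxSup t s (supMarg {i} F) y ≤
        ∫⁻ b, boxSup t (insert i s) F (Function.update y i b) := by
      intro y
      rw [supMarg_boxSup t s i hi, ENNReal.mul_iSup, ENNReal.add_iSup]
      refine iSup_le fun a => ?_
      exact one_dim_box (fun b => boxSup t s F (Function.update y i b)) _ t ht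
        (fun b u hu hut => boxSup_insert t s i hi F y b u hu hut) a
    have hR : lmarginal (vol1 n) (insert i s) (boxSup t (insert i s) F) x ≥
        lmarginal (vol1 n) (insert i s) (boxSup t s F) x +
         ENNReal.ofReal t * lmarginal (vol1 n) s (boxSup t s (supMarg {i} F)) x := by
      rw [lmarginal_insert' _ hm1 hi, lmarginal_insert' _ hm2 hi]
      have hmB := (boxSup_lsc t s hPi).measurable
      have h3 : ENNReal.ofReal t * lmarginal (vol1 n) s (boxSup t s (supMarg {i} F)) x =
          lmarginal (vol1 n) s (fun y => ENNReal.ofReal t * boxSup t s (supMarg {i} F) y) x := by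
        unfold lmarginal
        rw [lintegral_const_mul]
        exact hmB.comp measurable_updateFinset
      rw [h3]
      have h4 : lmarginal (vol1 n) s (fun y => ∫⁻ b, boxSup t s F (Function.update y i b)) x +
          lmarginal (vol1 n) s (fun y => ENNReal.ofReal t * boxSup t s (supMarg {i} F) y) x =
          lmarginal (vol1 n) s (fun y => (∫⁻ b, boxSup t s F (Function.update y i b)) +
            ENNReal.ofReal t * boxSup t s (supMarg {i} F) y) x := by
        unfold lmarginal
        rw [lintegral_add_right]
        exact (hmB.const_mul _).comp measurable_updateFinset
      rw [h4]
      exact lmarginal_mono key x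
    refine le_trans ?_ hR
    rw [Finset.sum_powerset_insert hi, add_comm]
    refine add_le_add ?_ ?_
    · rw [lmarginal_insert _ hm2 hi]
      have : ∫⁻ b, ∑ I ∈ s.powerset, ENNReal.ofReal t ^ (s \ I).card *
          lmarginal (vol1 n) I (supMarg (s \ I) F) (Function.update x i b) ≤
          ∫⁻ b, lmarginal (vol1 n) s (boxSup t s F) (Function.update x i b) :=
        lintegral_mono fun b => ih F hF _
      refine le_trans (le_of_eq ?_) this
      have hmm : ∀ I, Measurable (fun b => lmarginal (vol1 n) I (supMarg (s \ I) F)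
          (Function.update x i b)) := fun I =>
        ((supMarg_lsc _ hF).measurable.lmarginal _).comp (measurable_update x)
      rw [lintegral_finsetSum _ (fun I _ => (hmm I).const_mul _)]
      refine Finset.sum_congr rfl fun I hI => ?_
      have hiI : i ∉ I := fun h => hi (Finset.mem_powerset.mp hI h)
      rw [lintegral_const_mul _ (hmm I), lmarginal_insert _ (supMarg_lsc _ hF).measurable hiI]
      have : insert i s \ insert i I = s \ I := by
        ext j; simp only [Finset.mem_sdiff, Finset.mem_insert]
        constructor
        · rintro ⟨h1, h2⟩; push Not at h2; exact ⟨h1.resolve_left h2.1, h2.2⟩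
        · rintro ⟨h1, h2⟩; exact ⟨Or.inr h1, by rintro (rfl | h); exacts [hi h1, h2 h]⟩
      rw [this]
    · refine le_trans (le_of_eq ?_) (mul_le_mul_right (ih _ hPi x) _)
      rw [Finset.mul_sum]
      refine Finset.sum_congr rfl fun I hI => ?_
      have hiI : i ∉ I := fun h => hi (Finset.mem_powerset.mp hI h)
      have h5 : insert i s \ I = insert i (s \ I) := Finset.insert_sdiff_of_notMem _ hiI
      have h6 : i ∉ s \ I := by simp [hi]
      rw [supMarg_supMarg _ _ h6, h5, Finset.card_insert_of_notMem h6, pow_succ]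
      ring

/-- Finner's inequality -/
lemma finner {n : ℕ} {α : Type*} (T : Finset α) (S : α → Finset (Fin n)) (m : ℕ) (hm : 0 < m)
    (φ : α → (Fin n → ℝ) → ℝ≥0∞) (hφ : ∀ a ∈ T, Measurable (φ a))
    (hdep : ∀ a ∈ T, ∀ i ∉ S a, ∀ x b, φ a (Function.update x i b) = φ a x)
    (hcard : ∀ i, (T.filter (fun a => i ∈ S a)).card = m) (s : Finset (Fin n)) : ∀ x,
    lmarginal (vol1 n) s (fun y => ∏ a ∈ T, φ a y ^ (1 / (m : ℝ))) x ≤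
      ∏ a ∈ T, lmarginal (vol1 n) (S a ∩ s) (φ a) x ^ (1 / (m : ℝ)) := by
  induction s using Finset.induction_on with
  | empty => intro x; simp
  | insert i s hi ih =>
    intro x
    have hmeas : Measurable (fun y => ∏ a ∈ T, φ a y ^ (1 / (m : ℝ))) :=
      Finset.measurable_prod _ fun a ha => (hφ a ha).pow_const _
    rw [lmarginal_insert _ hmeas hi]
    refine le_trans (lintegral_mono fun b => ih _) ?_
    have hconst : ∀ a ∈ T, i ∉ S a → ∀ b, lmarginal (vol1 n) (S a ∩ s) (φ a)
        (Function.update x i b) = lmarginal (vol1 n) (S a ∩ insert i s) (φ a) x := by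
      intro a ha hia b
      have h1 : S a ∩ insert i s = S a ∩ s := by
        ext j; simp only [Finset.mem_inter, Finset.mem_insert]
        constructor
        · rintro ⟨h1, rfl | h2⟩; exacts [absurd h1 hia, ⟨h1, h2⟩]
        · rintro ⟨h1, h2⟩; exact ⟨h1, Or.inr h2⟩
      rw [h1, lmarginal_update_of_notMem (hφ a ha) (by simp [hia])]
      congr 1
      ext y; exact hdep a ha i hia y b
    have hsplit : ∀ b, ∏ a ∈ T, lmarginal (vol1 n) (S a ∩ s) (φ a) (Function.update x i b) ^
        (1 / (m : ℝ)) =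
        (∏ a ∈ T.filter (fun a => i ∈ S a), lmarginal (vol1 n) (S a ∩ s) (φ a)
          (Function.update x i b) ^ (1 / (m : ℝ))) *
        ∏ a ∈ T.filter (fun a => ¬ i ∈ S a), lmarginal (vol1 n) (S a ∩ insert i s) (φ a) x ^
          (1 / (m : ℝ)) := by
      intro b
      rw [← Finset.prod_filter_mul_prod_filter_not T (fun a => i ∈ S a)]
      congr 1
      refine Finset.prod_congr rfl fun a ha => ?_
      rw [Finset.mem_filter] at ha
      rw [hconst a ha.1 ha.2]
    simp_rw [hsplit]
    have hmm : ∀ a ∈ T, Measurable (fun b => lmarginal (vol1 n) (S a ∩ s) (φ a)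
        (Function.update x i b)) := fun a ha =>
      ((hφ a ha).lmarginal _).comp (measurable_update x)
    rw [lintegral_mul_const _ (Finset.measurable_prod _ fun a ha =>
      (hmm a (Finset.mem_filter.mp ha).1).pow_const _),
      ← Finset.prod_filter_mul_prod_filter_not T (fun a => i ∈ S a)]
    gcongr ?_ * _
    refine le_trans (ENNReal.lintegral_prod_norm_pow_le _ (fun a ha =>
      (hmm a (Finset.mem_filter.mp ha).1).aemeasurable) ?_ (fun a _ => by positivity)) ?_
    · rw [Finset.sum_const, hcard, nsmul_eq_mul]; field_simp
    · refine le_of_eq (Finset.prod_congr rfl fun a ha => ?_)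
      rw [Finset.mem_filter] at ha
      have h1 : S a ∩ insert i s = insert i (S a ∩ s) := by
        rw [Finset.inter_insert_of_mem ha.2]
      rw [h1, lmarginal_insert _ (hφ a ha.1) (by simp [hi])]


lemma sum_perm_det {n : ℕ} (M : Matrix (Fin n) (Fin n) ℝ) :
    ∑ σ : Equiv.Perm (Fin n), ∑ τ : Equiv.Perm (Fin n),
      ((Equiv.Perm.sign σ : ℤ) : ℝ) * ((Equiv.Perm.sign τ : ℤ) : ℝ) * ∏ i, M (σ i) (τ i) =
    (n.factorial : ℝ) * M.det := by
  have h : ∀ σ : Equiv.Perm (Fin n), ∑ τ : Equiv.Perm (Fin n),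
      ((Equiv.Perm.sign σ : ℤ) : ℝ) * ((Equiv.Perm.sign τ : ℤ) : ℝ) * ∏ i, M (σ i) (τ i) = M.det := by
    intro σ
    have h1 := Matrix.det_permute σ M
    rw [← Matrix.det_transpose, Matrix.det_apply'] at h1
    simp only [Matrix.transpose_apply, Matrix.submatrix_apply, id] at h1
    simp_rw [mul_assoc]
    rw [← Finset.mul_sum, h1, ← mul_assoc]
    rcases Int.units_eq_one_or (Equiv.Perm.sign σ) with h | h <;> simp [h]
  simp_rw [h]
  simp [Fintype.card_perm]

lemma bdd_integrableOn {n : ℕ} {S : Set (Fin n → ℝ)}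
    (hb : Bornology.IsBounded S) {f : (Fin n → ℝ) → ℝ} (hf : Continuous f) :
    IntegrableOn f S := by
  have hc : IsCompact (closure S) := hb.isCompact_closure
  exact (hf.continuousOn.integrableOn_compact hc).mono_set subset_closure

lemma integral_det_sq {n : ℕ} {S : Set (Fin n → ℝ)} (hS : MeasurableSet S)
    (hb : Bornology.IsBounded S) :
    ∫ x : Fin n → (Fin n → ℝ), (Matrix.of x).det ^ 2 ∂(Measure.pi fun _ => volume.restrict S) =
      (n.factorial : ℝ) * (Matrix.of fun i j => ∫ y in S, y i * y j).det := by
  rw [← sum_perm_det]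
  have hIntg : ∀ σ τ : Equiv.Perm (Fin n), Integrable (fun x : Fin n → (Fin n → ℝ) =>
      ((Equiv.Perm.sign σ : ℤ) : ℝ) * ((Equiv.Perm.sign τ : ℤ) : ℝ) *
        ∏ i, (x i (σ i) * x i (τ i))) (Measure.pi fun _ => volume.restrict S) := by
    intro σ τ
    refine Integrable.const_mul ?_ _
    exact Integrable.fintype_prod_dep (f := fun i (y : Fin n → ℝ) => y (σ i) * y (τ i))
      (fun i => bdd_integrableOn hb (by fun_prop))
  have hexp : ∀ x : Fin n → (Fin n → ℝ), (Matrix.of x).det ^ 2 =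
      ∑ σ : Equiv.Perm (Fin n), ∑ τ : Equiv.Perm (Fin n),
      ((Equiv.Perm.sign σ : ℤ) : ℝ) * ((Equiv.Perm.sign τ : ℤ) : ℝ) *
        ∏ i, (x i (σ i) * x i (τ i)) := by
    intro x
    rw [← Matrix.det_transpose, Matrix.det_apply', sq, Finset.sum_mul_sum]
    refine Finset.sum_congr rfl fun σ _ => Finset.sum_congr rfl fun τ _ => ?_
    simp only [Matrix.transpose_apply, Matrix.of_apply, Finset.prod_mul_distrib]
    ring
  simp_rw [hexp]
  rw [integral_finsetSum _ (fun σ _ => integrable_finsetSum _ fun τ _ => hIntg σ τ)]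
  refine Finset.sum_congr rfl fun σ _ => ?_
  rw [integral_finsetSum _ (fun τ _ => hIntg σ τ)]
  refine Finset.sum_congr rfl fun τ _ => ?_
  rw [integral_const_mul]
  congr 1
  exact integral_fintype_prod_eq_prod (μ := fun _ => volume.restrict S)
    (fun i (y : Fin n → ℝ) => y (σ i) * y (τ i))

lemma moment_posDef {n : ℕ} {S : Set (Fin n → ℝ)} (hS : MeasurableSet S)
    (hb : Bornology.IsBounded S) (hv : volume S ≠ 0) :
    (Matrix.of fun i j => ∫ y in S, y i * y j : Matrix (Fin n) (Fin n) ℝ).PosDef := by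
  refine Matrix.PosDef.of_dotProduct_mulVec_pos ?_ fun u hu => ?_
  · ext i j; simp [mul_comm]
  · have h1 : star u ⬝ᵥ ((Matrix.of fun i j => ∫ y in S, y i * y j).mulVec u) =
        ∫ y in S, (∑ i, u i * y i) ^ 2 := by
      have : ∀ y : Fin n → ℝ, (∑ i, u i * y i) ^ 2 = ∑ i, ∑ j, u i * u j * (y i * y j) := by
        intro y; rw [sq, Finset.sum_mul_sum]
        exact Finset.sum_congr rfl fun i _ => Finset.sum_congr rfl fun j _ => by ring
      simp_rw [this]
      have hi : ∀ i j, Integrable (fun y : Fin n → ℝ => u i * u j * (y i * y j))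
        (volume.restrict S) := fun i j => bdd_integrableOn hb (by fun_prop)
      rw [integral_finsetSum _ (fun i _ => integrable_finsetSum _ fun j _ => hi i j)]
      simp only [dotProduct, Matrix.mulVec, Matrix.of_apply, Finset.mul_sum, star_trivial]
      refine Finset.sum_congr rfl fun i _ => ?_
      rw [integral_finsetSum _ (fun j _ => hi i j)]
      refine Finset.sum_congr rfl fun j _ => ?_
      rw [integral_const_mul]; ring
    rw [h1]
    have hI : IntegrableOn (fun y : Fin n → ℝ => (∑ i, u i * y i) ^ 2) S :=
      bdd_integrableOn hb (by fun_prop)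
    have h0 : 0 ≤ ∫ y in S, (∑ i, u i * y i) ^ 2 := integral_nonneg fun y => sq_nonneg _
    refine lt_of_le_of_ne h0 fun h => ?_
    have h2 := (setIntegral_eq_zero_iff_of_nonneg_ae
      (Filter.Eventually.of_forall fun y => sq_nonneg _) hI).mp h.symm
    let L : (Fin n → ℝ) →ₗ[ℝ] ℝ := ∑ i, u i • LinearMap.proj i
    have hL : ∀ y, L y = ∑ i, u i * y i := by intro y; simp [L]
    have hker : volume ((LinearMap.ker L : Submodule ℝ (Fin n → ℝ)) : Set (Fin n → ℝ)) = 0 := by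
      apply Measure.addHaar_submodule
      intro htop
      apply hu
      have : L u = 0 := by
        have : u ∈ LinearMap.ker L := by rw [htop]; trivial
        simpa using this
      rw [hL] at this
      have h3 := (Finset.sum_eq_zero_iff_of_nonneg (fun i _ => mul_self_nonneg (u i))).mp this
      ext i; simpa using h3 i (Finset.mem_univ i)
    apply hv
    rw [Filter.EventuallyEq, ae_restrict_iff' hS] at h2
    refine measure_mono_null (t := ((LinearMap.ker L : Submodule ℝ (Fin n → ℝ)) : Set (Fin n → ℝ)) ∪
      {y | ¬ (y ∈ S → (∑ i, u i * y i) ^ 2 = (0 : (Fin n → ℝ) → ℝ) y)}) ?_ (measure_union_null hker h2)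
    intro y hy
    by_cases h4 : (∑ i, u i * y i) = 0
    · left; simpa [hL] using h4
    · right; simp [hy, h4]

lemma gaussian_mat {n : ℕ} (C : Matrix (Fin n) (Fin n) ℝ) (hC : C.det ≠ 0) (b : ℝ) (hb : 0 < b) :
    ∫ x : Fin n → ℝ, Real.exp (-b * ∑ i, (C.mulVec x i) ^ 2) =
      |C.det|⁻¹ * √(Real.pi / b) ^ n ∧
    Integrable (fun x : Fin n → ℝ => Real.exp (-b * ∑ i, (C.mulVec x i) ^ 2)) := by
  have hmap := Real.map_matrix_volume_pi_eq_smul_volume_pi hC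
  have hg : ∀ y : Fin n → ℝ, Real.exp (-b * ∑ i, (y i) ^ 2) = ∏ i, Real.exp (-b * y i ^ 2) := by
    intro y; rw [Finset.mul_sum, Real.exp_sum]
  have hgi : Integrable (fun y : Fin n → ℝ => Real.exp (-b * ∑ i, (y i) ^ 2)) := by
    simp_rw [hg]
    exact Integrable.fintype_prod_dep (f := fun _ (y : ℝ) => Real.exp (-b * y ^ 2))
      (fun i => integrable_exp_neg_mul_sq hb)
  have hcm : AEMeasurable (Matrix.toLin' C) (volume : Measure (Fin n → ℝ)) :=
    (LinearMap.continuous_of_finiteDimensional _).aemeasurable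
  have hsm : ∀ μ : Measure (Fin n → ℝ), AEStronglyMeasurable (fun y : Fin n → ℝ => Real.exp (-b * ∑ i, (y i) ^ 2)) μ := fun μ =>
    (by fun_prop : Continuous (fun y : Fin n → ℝ => Real.exp (-b * ∑ i, (y i) ^ 2))).aestronglyMeasurable
  constructor
  · have := integral_map hcm (hsm _)
    rw [hmap, integral_smul_measure] at this
    simp only [Matrix.toLin'_apply] at this
    rw [← this]
    simp_rw [hg]
    rw [integral_fintype_prod_volume_eq_pow (fun y : ℝ => Real.exp (-b * y ^ 2)), integral_gaussian]
    simp [abs_inv]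
  · have := (integrable_map_measure (hsm _) hcm).mp (by
      rw [hmap]; exact hgi.smul_measure ENNReal.ofReal_ne_top)
    simpa [Function.comp_def] using this

lemma moment_bdd {n : ℕ} {S : Set (Fin n → ℝ)} (hS : MeasurableSet S)
    (hb : Bornology.IsBounded S) (D : ℝ) (hD0 : 0 ≤ D)
    (hD : ∀ x : Fin n → (Fin n → ℝ), (∀ i, x i ∈ S) → |(Matrix.of x).det| ≤ D) :
    (volume S).toReal ≤ √((2 * Real.pi * Real.exp 1) ^ n / n.factorial) * D := by
  have hfin : volume S ≠ ∞ := hb.measure_lt_top.ne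
  by_cases hv0 : volume S = 0
  · rw [hv0]; simp only [ENNReal.toReal_zero]; positivity
  set v := (volume S).toReal with hv
  have hvpos : 0 < v := ENNReal.toReal_pos hv0 hfin
  set M : Matrix (Fin n) (Fin n) ℝ := Matrix.of fun i j => ∫ y in S, y i * y j with hM
  have hPD : M.PosDef := moment_posDef hS hb hv0
  -- determinant upper bound
  have hdet : (n.factorial : ℝ) * M.det ≤ D ^ 2 * v ^ n := by
    rw [hM, ← integral_det_sq hS hb, ← Measure.restrict_pi_pi]
    have hfin2 : (Measure.pi fun _ : Fin n => (volume : Measure (Fin n → ℝ)))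
        (Set.univ.pi fun _ => S) = volume S ^ n := by
      rw [Measure.pi_pi]; simp
    have := norm_setIntegral_le_of_norm_le_const (μ := Measure.pi fun _ : Fin n => (volume : Measure (Fin n → ℝ)))
      (s := Set.univ.pi fun _ => S) (f := fun x : Fin n → (Fin n → ℝ) => (Matrix.of x).det ^ 2)
      (C := D ^ 2) (by rw [hfin2]; exact ENNReal.pow_lt_top hfin.lt_top) (fun x hx => by
        rw [Real.norm_eq_abs, abs_pow]
        exact pow_le_pow_left₀ (abs_nonneg _) (hD x fun i => hx i trivial) 2)
    refine (le_abs_self _).trans (this.trans (le_of_eq ?_))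
    rw [measureReal_def, hfin2, ENNReal.toReal_pow]
  obtain ⟨B, hB⟩ : ∃ B : Matrix (Fin n) (Fin n) ℝ, M = B.transpose * B := by
    open scoped MatrixOrder in
    obtain ⟨B, hB⟩ := CStarAlgebra.nonneg_iff_eq_star_mul_self.mp hPD.posSemidef.nonneg
    exact ⟨B, by rw [hB, Matrix.star_eq_conjTranspose, Matrix.conjTranspose_eq_transpose_of_trivial]⟩
  have hMdet : M.det = B.det ^ 2 := by rw [hB, Matrix.det_mul, Matrix.det_transpose, sq]
  have hBdet : B.det ≠ 0 := by
    intro h; have := hPD.det_pos; rw [hMdet, h] at this; simp at this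
  set C : Matrix (Fin n) (Fin n) ℝ := (B.transpose)⁻¹ with hC
  have hCB : C * B.transpose = 1 := Matrix.nonsing_inv_mul _ (by simp [hBdet])
  have hCM : C * M * C.transpose = 1 := by
    rw [hB, ← mul_assoc, hCB, one_mul]
    have := congrArg Matrix.transpose hCB
    simpa using this
  have hCdet : C.det * B.det = 1 := by
    have := congrArg Matrix.det hCB; simpa using this
  have hCd0 : C.det ≠ 0 := left_ne_zero_of_mul_eq_one hCdet
  have htr : ∫ y in S, ∑ i, (C.mulVec y i) ^ 2 = n := by
    have h1 : ∀ y : Fin n → ℝ, ∑ i, (C.mulVec y i) ^ 2 = ∑ i, ∑ j, ∑ k, C i j * C i k * (y j * y k) := by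
      intro y
      refine Finset.sum_congr rfl fun i _ => ?_
      rw [sq]; simp only [Matrix.mulVec, dotProduct]
      rw [Finset.sum_mul_sum]
      exact Finset.sum_congr rfl fun j _ => Finset.sum_congr rfl fun k _ => by ring
    simp_rw [h1]
    have hi : ∀ i j k, Integrable (fun y : Fin n → ℝ => C i j * C i k * (y j * y k))
        (volume.restrict S) := fun i j k => bdd_integrableOn hb (by fun_prop)
    have h2 : ∑ i, (C * M * C.transpose) i i = n := by rw [hCM]; simp
    rw [integral_finsetSum _ (fun i _ => integrable_finsetSum _ fun j _ => integrable_finsetSum _ fun k _ => hi i j k), ← h2]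
    refine Finset.sum_congr rfl fun i _ => ?_
    rw [integral_finsetSum _ (fun j _ => integrable_finsetSum _ fun k _ => hi i j k)]
    simp_rw [integral_finsetSum _ (fun k _ => hi i _ k), integral_const_mul]
    simp only [Matrix.mul_apply, Matrix.transpose_apply, Finset.sum_mul, hM, Matrix.of_apply]
    rw [Finset.sum_comm]
    exact Finset.sum_congr rfl fun j _ => Finset.sum_congr rfl fun k _ => by ring
  obtain ⟨hg1, hg2⟩ := gaussian_mat C hCd0 (v / 2) (by positivity)
  have hlow : v * Real.exp (-(n / 2 : ℝ)) ≤ |C.det|⁻¹ * √(Real.pi / (v / 2)) ^ n := by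
    rw [← hg1]
    have hq : IntegrableOn (fun y : Fin n → ℝ => ∑ i, (C.mulVec y i) ^ 2) S := by
      refine bdd_integrableOn hb ?_
      have : Continuous (fun y : Fin n → ℝ => C.mulVec y) := Continuous.matrix_mulVec continuous_const continuous_id
      fun_prop
    have hcI : Integrable (fun _ : Fin n → ℝ => (1 + n / 2 : ℝ)) (volume.restrict S) :=
      bdd_integrableOn hb continuous_const
    have hqI : Integrable (fun y : Fin n → ℝ => v / 2 * ∑ i, (C.mulVec y i) ^ 2) (volume.restrict S) :=
      hq.const_mul _
    calc v * Real.exp (-(n / 2 : ℝ)) = ∫ y in S, Real.exp (-(n / 2 : ℝ)) *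
          ((1 + n / 2) - v / 2 * ∑ i, (C.mulVec y i) ^ 2) := by
          rw [integral_const_mul, integral_sub hcI hqI, integral_const_mul, htr]
          simp only [integral_const, measureReal_def, Measure.restrict_apply_univ, smul_eq_mul, ← hv]
          ring
      _ ≤ ∫ y in S, Real.exp (-(v / 2) * ∑ i, (C.mulVec y i) ^ 2) := by
          refine integral_mono ((hcI.sub hqI).const_mul _) hg2.integrableOn ?_
          intro y
          simp only
          set q := ∑ i, (C.mulVec y i) ^ 2
          have : (n / 2 - v / 2 * q) + 1 ≤ Real.exp (n / 2 - v / 2 * q) := Real.add_one_le_exp _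
          calc Real.exp (-(n / 2 : ℝ)) * ((1 + n / 2) - v / 2 * q)
              ≤ Real.exp (-(n / 2 : ℝ)) * Real.exp (n / 2 - v / 2 * q) := by
                gcongr; linarith
            _ = Real.exp (-(v / 2) * q) := by rw [← Real.exp_add]; congr 1; ring
      _ ≤ _ := setIntegral_le_integral hg2 (Filter.Eventually.of_forall fun y => (Real.exp_pos _).le)
  have hfac : (0 : ℝ) < n.factorial := by exact_mod_cast n.factorial_pos
  have hsq : v ^ 2 ≤ (2 * Real.pi * Real.exp 1) ^ n / n.factorial * D ^ 2 := by
    have h1 := pow_le_pow_left₀ (by positivity) hlow 2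
    have h2 : (|C.det|⁻¹) ^ 2 = M.det := by
      rw [hMdet, inv_pow, sq_abs]
      rw [inv_eq_iff_eq_inv, ← inv_pow, eq_inv_of_mul_eq_one_left hCdet]
    have h3 : (√(Real.pi / (v / 2)) ^ n) ^ 2 = (2 * Real.pi / v) ^ n := by
      rw [← pow_mul, mul_comm n 2, pow_mul, Real.sq_sqrt (by positivity)]
      congr 1; field_simp
    have h4 : Real.exp (-(n / 2 : ℝ)) ^ 2 = (Real.exp 1 ^ n)⁻¹ := by
      rw [← Real.exp_nat_mul, ← Real.exp_nat_mul, ← Real.exp_neg]; congr 1; push_cast; ring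
    rw [mul_pow, mul_pow, h2, h3, h4, div_pow] at h1
    have h5 : M.det ≤ D ^ 2 * v ^ n / n.factorial := by
      rw [le_div_iff₀ hfac]; linarith
    have h6 : v ^ 2 * (Real.exp 1 ^ n)⁻¹ ≤ D ^ 2 * v ^ n / n.factorial * ((2 * Real.pi) ^ n / v ^ n) :=
      h1.trans (by gcongr)
    have h7 : D ^ 2 * v ^ n / n.factorial * ((2 * Real.pi) ^ n / v ^ n) = D ^ 2 * (2 * Real.pi) ^ n / n.factorial := by
      field_simp
    rw [h7, ← div_eq_mul_inv, div_le_iff₀ (by positivity)] at h6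
    refine h6.trans (le_of_eq ?_)
    rw [mul_pow (2 * Real.pi)]; ring
  refine abs_le_of_sq_le_sq' ?_ (by positivity) |>.2
  rw [mul_pow, Real.sq_sqrt (by positivity)]
  exact hsq

lemma moment_bound {n : ℕ} {S : Set (Fin n → ℝ)} (hS : MeasurableSet S) (D : ℝ) (hD0 : 0 ≤ D)
    (hD : ∀ x : Fin n → (Fin n → ℝ), (∀ i, x i ∈ S) → |(Matrix.of x).det| ≤ D) :
    volume S ≤ ENNReal.ofReal (√((2 * Real.pi * Real.exp 1) ^ n / n.factorial) * D) := by
  have hU : S = ⋃ m : ℕ, S ∩ Metric.closedBall 0 m := by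
    rw [← Set.inter_iUnion, Metric.iUnion_closedBall_nat, Set.inter_univ]
  have hmono : Monotone fun m : ℕ => S ∩ Metric.closedBall (0 : Fin n → ℝ) m := by
    intro a b hab
    exact Set.inter_subset_inter_right _ (Metric.closedBall_subset_closedBall (by exact_mod_cast hab))
  rw [hU, hmono.measure_iUnion]
  refine iSup_le fun m => ?_
  have hb : Bornology.IsBounded (S ∩ Metric.closedBall (0 : Fin n → ℝ) m) :=
    Metric.isBounded_closedBall.subset Set.inter_subset_right
  rw [← ENNReal.ofReal_toReal hb.measure_lt_top.ne]
  exact ENNReal.ofReal_le_ofReal (moment_bdd (hS.inter Metric.isClosed_closedBall.measurableSet) hb D hD0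
    fun x hx => hD x fun i => (hx i).1)


/-- log-concavity for extended nonnegative functions -/
def LC {E : Type*} [AddCommGroup E] [Module ℝ E] (F : E → ℝ≥0∞) : Prop :=
  ∀ x y (a b : ℝ), 0 < a → 0 < b → a + b = 1 → F x ^ a * F y ^ b ≤ F (a • x + b • y)

lemma LC.min_le {E : Type*} [AddCommGroup E] [Module ℝ E] {F : E → ℝ≥0∞} (hF : LC F)
    (x y : E) (a b : ℝ) (ha : 0 < a) (hb : 0 < b) (hab : a + b = 1) :
    min (F x) (F y) ≤ F (a • x + b • y) := by
  refine le_trans ?_ (hF x y a b ha hb hab)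
  calc min (F x) (F y) = min (F x) (F y) ^ a * min (F x) (F y) ^ b := by
        rw [← ENNReal.rpow_add_of_nonneg _ _ ha.le hb.le, hab, ENNReal.rpow_one]
    _ ≤ _ := by gcongr <;> simp

lemma LC.convex_le {E : Type*} [AddCommGroup E] [Module ℝ E] {F : E → ℝ≥0∞} (hF : LC F)
    (c : ℝ≥0∞) : Convex ℝ {x | c ≤ F x} := by
  rw [convex_iff_forall_pos]
  intro x hx y hy a b ha hb hab
  exact (le_min hx hy).trans (hF.min_le x y a b ha hb hab)

lemma LC.convex_lt {E : Type*} [AddCommGroup E] [Module ℝ E] {F : E → ℝ≥0∞} (hF : LC F)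
    (c : ℝ≥0∞) : Convex ℝ {x | c < F x} := by
  rw [convex_iff_forall_pos]
  intro x hx y hy a b ha hb hab
  exact (lt_min hx hy).trans_le (hF.min_le x y a b ha hb hab)

lemma LC.rpow {E : Type*} [AddCommGroup E] [Module ℝ E] {F : E → ℝ≥0∞} (hF : LC F)
    {p : ℝ} (hp : 0 ≤ p) : LC (fun x => F x ^ p) := by
  intro x y a b ha hb hab
  simp only
  rw [← ENNReal.rpow_mul, ← ENNReal.rpow_mul, mul_comm p, mul_comm p, ENNReal.rpow_mul,
    ENNReal.rpow_mul, ← ENNReal.mul_rpow_of_nonneg _ _ hp]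
  exact ENNReal.rpow_le_rpow (hF x y a b ha hb hab) hp

lemma LC.comp_linear {E E' : Type*} [AddCommGroup E] [Module ℝ E] [AddCommGroup E'] [Module ℝ E']
    {F : E → ℝ≥0∞} (hF : LC F) (L : E' →ₗ[ℝ] E) : LC (fun x => F (L x)) := by
  intro x y a b ha hb hab
  simp only [map_add, map_smul]
  exact hF _ _ a b ha hb hab

lemma lintegral_homothety {ι : Type*} [Fintype ι] (F : (ι → ℝ) → ℝ≥0∞) (c : ℝ) (hc : 0 < c)
    (v : ι → ℝ) :
    ∫⁻ x, F (c • x + v) = ENNReal.ofReal ((c ^ Fintype.card ι)⁻¹) * ∫⁻ x, F x := by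
  have h1 : ∫⁻ x : ι → ℝ, F (c • x + v) = ∫⁻ y, F (y + v) ∂(Measure.map (c • ·) volume) :=
    ((Homeomorph.smulOfNeZero c hc.ne').measurableEmbedding.lintegral_map (fun y => F (y + v))).symm
  rw [h1, Measure.map_addHaar_smul _ hc.ne', lintegral_smul_measure, lintegral_add_right_eq_self F v]
  simp [abs_of_pos hc]

lemma LC.exists_level {n : ℕ} {F : (Fin n → ℝ) → ℝ≥0∞} (hm : Measurable F)
    (h0 : ∫⁻ x, F x ≠ 0) : ∃ t : ℝ≥0∞, t ≠ 0 ∧ t ≠ ∞ ∧ volume {x | t ≤ F x} ≠ 0 := by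
  by_contra hcon
  push Not at hcon
  apply h0
  rw [lintegral_eq_zero_iff hm]
  have : {x | F x ≠ 0} ⊆ ⋃ k : ℕ, {x | ((k : ℝ≥0∞) + 1)⁻¹ ≤ F x} := by
    intro x hx
    obtain ⟨k, hk⟩ := ENNReal.exists_inv_nat_lt hx
    refine Set.mem_iUnion.mpr ⟨k, ?_⟩
    exact (ENNReal.inv_le_inv.mpr le_self_add).trans hk.le
  refine measure_mono_null this (measure_iUnion_null fun k => hcon _ ?_ ?_)
  · simp
  · simp

lemma LC.bounded {n : ℕ} {F : (Fin n → ℝ) → ℝ≥0∞} (hF : LC F) (hm : Measurable F)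
    (h0 : ∫⁻ x, F x ≠ 0) (hi : ∫⁻ x, F x ≠ ∞) : ∃ M : ℝ≥0∞, M ≠ ∞ ∧ M ≠ 0 ∧ ∀ x, F x ≤ M := by
  obtain ⟨t, ht0, ht1, hL⟩ := LC.exists_level hm h0
  set K : ℝ≥0∞ := (ENNReal.ofReal (((1/2 : ℝ) ^ n)⁻¹) * ∫⁻ x, F x) /
    (t ^ (1/2 : ℝ) * volume {x | t ≤ F x}) with hK
  have hne : t ^ (1/2 : ℝ) * volume {x | t ≤ F x} ≠ 0 := by
    refine mul_ne_zero ?_ hL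
    simp [ENNReal.rpow_eq_zero_iff, ht0, ht1]
  have hKtop : K ≠ ∞ := ENNReal.div_ne_top (ENNReal.mul_ne_top ENNReal.ofReal_ne_top hi) hne
  have hLt : volume {x | t ≤ F x} ≠ ∞ := by
    have := mul_meas_ge_le_lintegral hm t (μ := volume)
    intro h; rw [h, ENNReal.mul_top ht0] at this; exact hi (top_le_iff.mp this)
  have key : ∀ x, F x ^ (1/2 : ℝ) ≤ K := by
    intro x
    rw [hK, ENNReal.le_div_iff_mul_le (Or.inl hne) (Or.inl (ENNReal.mul_ne_top
      (ENNReal.rpow_ne_top_of_nonneg (by norm_num) ht1) hLt))]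
    have h1 := lintegral_homothety F (1/2) (by norm_num) ((1/2 : ℝ) • x)
    rw [Fintype.card_fin] at h1
    rw [← h1, ← mul_assoc, ← setLIntegral_const]
    refine le_trans ?_ (setLIntegral_le_lintegral {x | t ≤ F x} _)
    refine setLIntegral_mono' (measurableSet_le measurable_const hm) fun y hy => ?_
    refine le_trans ?_ (hF y x (1/2) (1/2) (by norm_num) (by norm_num) (by norm_num))
    rw [mul_comm]
    gcongr; exact hy
  refine ⟨K ^ (2 : ℝ) + 1, by simp [hKtop], by simp, fun x => le_add_right ?_⟩
  calc F x = (F x ^ (1/2 : ℝ)) ^ (2 : ℝ) := by rw [← ENNReal.rpow_mul]; norm_num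
    _ ≤ _ := ENNReal.rpow_le_rpow (key x) (by norm_num)

lemma LC.exists_ball {n : ℕ} {F : (Fin n → ℝ) → ℝ≥0∞} (hF : LC F) (hm : Measurable F)
    (h0 : ∫⁻ x, F x ≠ 0) : ∃ (x₁ : Fin n → ℝ) (r : ℝ) (δ : ℝ≥0∞), 0 < r ∧ δ ≠ 0 ∧ δ ≠ ∞ ∧
      ∀ x ∈ Metric.ball x₁ r, δ ≤ F x := by
  obtain ⟨t, ht0, ht1, hL⟩ := LC.exists_level hm h0
  have hconv := hF.convex_le t
  have hIntg : (interior {x | t ≤ F x}).Nonempty := by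
    by_contra hne
    rw [Set.not_nonempty_iff_eq_empty] at hne
    apply hL
    refine measure_mono_null ?_ (hconv.addHaar_frontier volume)
    rw [frontier, hne, Set.sdiff_empty]
    exact subset_closure
  obtain ⟨x₁, hx₁⟩ := hIntg
  obtain ⟨r, hr, hball⟩ := Metric.isOpen_iff.mp isOpen_interior x₁ hx₁
  exact ⟨x₁, r, t, hr, ht0, ht1, fun x hx => by
    have h : x ∈ {x | t ≤ F x} := interior_subset (hball hx)
    exact h⟩

/-- lower semicontinuous regularization from above -/
def reg {n : ℕ} (ε : ℝ) (F : (Fin n → ℝ) → ℝ≥0∞) (x : Fin n → ℝ) : ℝ≥0∞ :=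
  ⨆ u : {u : Fin n → ℝ // ‖u‖ < ε}, F (x + u.1)

lemma reg_lsc {n : ℕ} (ε : ℝ) (F : (Fin n → ℝ) → ℝ≥0∞) : LowerSemicontinuous (reg ε F) := by
  intro x c hc
  obtain ⟨u, hu⟩ := lt_iSup_iff.mp hc
  have hcont : Continuous (fun y : Fin n → ℝ => ‖x + u.1 - y‖) := by fun_prop
  have hopen : {y : Fin n → ℝ | ‖x + u.1 - y‖ < ε} ∈ nhds x :=
    (isOpen_lt hcont continuous_const).mem_nhds (by simpa using u.2)
  filter_upwards [hopen] with y hy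
  refine lt_of_lt_of_le hu (le_iSup_of_le ⟨x + u.1 - y, hy⟩ (le_of_eq ?_))
  congr 1; simp

lemma le_reg {n : ℕ} {ε : ℝ} (hε : 0 < ε) (F : (Fin n → ℝ) → ℝ≥0∞) (x : Fin n → ℝ) :
    F x ≤ reg ε F x :=
  le_iSup_of_le ⟨0, by simpa using hε⟩ (by simp)

lemma reg_LC {n : ℕ} {ε : ℝ} {F : (Fin n → ℝ) → ℝ≥0∞} (hF : LC F) : LC (reg ε F) := by
  intro x y a b ha hb hab
  unfold reg
  rw [← ENNReal.orderIsoRpow_apply a ha, ← ENNReal.orderIsoRpow_apply b hb, OrderIso.map_iSup,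
    OrderIso.map_iSup, ENNReal.iSup_mul]
  refine iSup_le fun u => ?_
  rw [ENNReal.mul_iSup]
  refine iSup_le fun w => ?_
  simp only [ENNReal.orderIsoRpow_apply]
  refine (hF _ _ a b ha hb hab).trans (le_iSup_of_le ⟨a • u.1 + b • w.1, ?_⟩ (le_of_eq ?_))
  · calc ‖a • u.1 + b • w.1‖ ≤ a * ‖u.1‖ + b * ‖w.1‖ := by
          refine (norm_add_le _ _).trans ?_
          rw [norm_smul, norm_smul, Real.norm_of_nonneg ha.le, Real.norm_of_nonneg hb.le]
      _ < a * ε + b * ε := by gcongr; exacts [u.2, w.2]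
      _ = ε := by rw [← add_mul, hab, one_mul]
  · congr 1; simp only [smul_add]; abel

lemma reg_le {n : ℕ} {F : (Fin n → ℝ) → ℝ≥0∞} (hF : LC F) {x₁ : Fin n → ℝ} {r : ℝ} {δ M : ℝ≥0∞}
    (hr : 0 < r) (hδ0 : δ ≠ 0) (hδ1 : δ ≠ ∞) (hball : ∀ x ∈ Metric.ball x₁ r, δ ≤ F x)
    (hM : ∀ x, F x ≤ M) {l : ℝ} (hl0 : 0 < l) (hl1 : l < 1) (x : Fin n → ℝ) :
    reg (l / (1 - l) * r) F x ≤ (M / δ) ^ l * F ((1 - l) • x + l • x₁) := by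
  refine iSup_le fun u => ?_
  have h1l : 0 < 1 - l := by linarith
  set w : Fin n → ℝ := x₁ - ((1 - l) / l) • u.1 with hw
  have hwb : w ∈ Metric.ball x₁ r := by
    rw [mem_ball_iff_norm, hw]
    simp only [sub_sub_cancel_left, norm_neg, norm_smul]
    rw [Real.norm_of_nonneg (by positivity)]
    calc (1 - l) / l * ‖u.1‖ < (1 - l) / l * (l / (1 - l) * r) := by
          have := u.2; gcongr
      _ = r := by field_simp
  have h1 := hF (x + u.1) w (1 - l) l h1l hl0 (by ring)
  have h2 : (1 - l) • (x + u.1) + l • w = (1 - l) • x + l • x₁ := by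
    rw [hw, smul_sub, smul_smul, mul_div_cancel₀ _ hl0.ne', smul_add]; abel
  rw [h2] at h1
  have h3 : F (x + u.1) ^ (1 - l) * δ ^ l ≤ F ((1 - l) • x + l • x₁) := by
    refine le_trans ?_ h1
    gcongr; exact hball w hwb
  calc F (x + u.1) = F (x + u.1) ^ l * F (x + u.1) ^ (1 - l) := by
        rw [← ENNReal.rpow_add_of_nonneg _ _ hl0.le h1l.le]; simp
    _ ≤ M ^ l * F (x + u.1) ^ (1 - l) := by gcongr; exact hM _
    _ = (M / δ) ^ l * (F (x + u.1) ^ (1 - l) * δ ^ l) := by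
        rw [ENNReal.div_rpow_of_nonneg _ _ hl0.le, mul_comm (F (x + u.1) ^ (1 - l)), ← mul_assoc,
          ENNReal.div_mul_cancel]
        · simp [ENNReal.rpow_eq_zero_iff, hδ0, hδ1]
        · exact ENNReal.rpow_ne_top_of_nonneg hl0.le hδ1
    _ ≤ _ := by gcongr


lemma exists_near_max {n : ℕ} {h : (Fin n → ℝ) → ℝ≥0∞} (hF : LC h) (hm : Measurable h)
    (h0 : ∫⁻ x, h x ≠ 0) (hi : ∫⁻ x, h x ≠ ∞) :
    ∃ x₀, 0 < (h x₀).toReal ∧ (∀ x, (h x).toReal ≤ 1.4 * (h x₀).toReal) ∧ ∀ x, h x ≠ ∞ := by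
  obtain ⟨M, hM1, hM0, hM⟩ := hF.bounded hm h0 hi
  have hfin : ∀ x, h x ≠ ∞ := fun x => ne_top_of_le_ne_top hM1 (hM x)
  have hbdd : BddAbove (Set.range fun x => (h x).toReal) :=
    ⟨M.toReal, by rintro _ ⟨x, rfl⟩; exact ENNReal.toReal_mono hM1 (hM x)⟩
  have hpos : ∃ x, 0 < (h x).toReal := by
    by_contra hcon
    push Not at hcon
    apply h0
    rw [lintegral_eq_zero_iff hm]
    refine Filter.Eventually.of_forall fun x => ?_
    have := le_antisymm (hcon x) ENNReal.toReal_nonneg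
    exact ((ENNReal.toReal_eq_zero_iff _).mp this).resolve_right (hfin x)
  obtain ⟨y, hy⟩ := hpos
  have hS : 0 < ⨆ x, (h x).toReal := hy.trans_le (le_ciSup hbdd y)
  obtain ⟨x₀, hx₀⟩ := exists_lt_of_lt_ciSup (show (⨆ x, (h x).toReal) / 1.4 < ⨆ x, (h x).toReal by
    rw [div_lt_iff₀ (by norm_num)]; linarith)
  refine ⟨x₀, lt_of_le_of_lt (by positivity) hx₀, fun x => ?_, hfin⟩
  have := le_ciSup hbdd x
  rw [div_lt_iff₀ (by norm_num)] at hx₀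
  linarith

lemma level_num (n : ℕ) (hn : 2 ≤ n) : Real.exp (-(3 * n / 2)) * 2 ^ n ≤ 1 / 5 := by
  have e : Real.exp (-(3 * n / 2)) * 2 ^ n = (2 * Real.exp (-(3/2))) ^ n := by
    rw [mul_pow, ← Real.exp_nat_mul, mul_comm]; congr 2; ring
  have h2 : (2 * Real.exp (-(3/2))) ^ 2 ≤ 1 / 5 := by
    rw [mul_pow, ← Real.exp_nat_mul]
    have : Real.exp ((2:ℕ) * (-(3/2))) = (Real.exp 1 ^ 3)⁻¹ := by
      rw [← Real.exp_nat_mul, ← Real.exp_neg]; norm_num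
    rw [this]
    have h3 : (20 : ℝ) ≤ Real.exp 1 ^ 3 := by
      have := Real.exp_one_gt_d9
      calc (20:ℝ) ≤ 2.7182 ^ 3 := by norm_num
        _ ≤ _ := by gcongr; linarith
    have h4 := inv_anti₀ (by norm_num) h3
    norm_num at h4 ⊢; linarith
  have h1 : 2 * Real.exp (-(3/2)) ≤ 1 := by
    by_contra hc
    push Not at hc
    nlinarith
  rw [e]
  exact (pow_le_pow_of_le_one (by positivity) h1 hn).trans h2

lemma level_selection {n : ℕ} (hn : 2 ≤ n) {h : (Fin n → ℝ) → ℝ≥0∞} (hF : LC h)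
    (hm : Measurable h) (h0 : ∫⁻ x, h x ≠ 0) (hi : ∫⁻ x, h x ≠ ∞) (b : ℝ) (hb : 0 ≤ b)
    (hB : ∀ τ : ℝ, 0 < τ → volume {x | τ ≤ (h x).toReal} ≤ ENNReal.ofReal (b / τ)) :
    ∫⁻ x, h x ≤ ENNReal.ofReal (4 * n * b) := by
  obtain ⟨x₀, ha, hmax, hfin⟩ := exists_near_max hF hm h0 hi
  set a := (h x₀).toReal with hadef
  set f : (Fin n → ℝ) → ℝ := fun x => (h x).toReal with hf
  have hfm : Measurable f := hm.ennreal_toReal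
  have hhf : ∀ x, h x = ENNReal.ofReal (f x) := fun x => (ENNReal.ofReal_toReal (hfin x)).symm
  set t0 : ℝ := a * Real.exp (-(3 * n)) with ht0
  have ht0p : 0 < t0 := by positivity
  have ht0a : t0 ≤ 1.4 * a := by
    have : Real.exp (-(3 * (n:ℝ))) ≤ 1 := Real.exp_le_one_iff.mpr (by simp)
    nlinarith
  set V := ∫⁻ x, h x with hV
  have hlc : V = ∫⁻ t in Set.Ioi 0, volume {x | t ≤ f x} := by
    rw [hV, ← lintegral_eq_lintegral_meas_le volume (Filter.Eventually.of_forall fun x =>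
      ENNReal.toReal_nonneg) hfm.aemeasurable]
    exact lintegral_congr hhf
  have hsplit : V ≤ (∫⁻ t in Set.Ioc 0 t0, volume {x | t ≤ f x}) +
      ∫⁻ t in Set.Ioi t0, volume {x | t ≤ f x} := by
    rw [hlc, ← Set.Ioc_union_Ioi_eq_Ioi ht0p.le]
    exact lintegral_union_le _ _ _
  have hfirst : ∫⁻ t in Set.Ioc 0 t0, volume {x | t ≤ f x} ≤ ENNReal.ofReal (1/5) * V := by
    have e1 : ∫⁻ t in Set.Ioc 0 t0, volume {x | t ≤ f x} ≤
        ∫⁻ x, ENNReal.ofReal (min (f x) t0) := by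
      rw [lintegral_eq_lintegral_meas_le volume (Filter.Eventually.of_forall fun x =>
        le_min ENNReal.toReal_nonneg ht0p.le) (hfm.min measurable_const).aemeasurable]
      refine le_trans ?_ (lintegral_mono_set (show Set.Ioc 0 t0 ⊆ Set.Ioi 0 from Set.Ioc_subset_Ioi_self))
      refine setLIntegral_mono' measurableSet_Ioc fun t ht => measure_mono fun x hx => ?_
      exact le_min hx ht.2
    have e2 : ∀ x, ENNReal.ofReal (min (f x) t0) ≤
        ENNReal.ofReal (Real.exp (-(3 * n / 2))) * h ((1/2 : ℝ) • x + (1/2 : ℝ) • x₀) := by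
      intro x
      have h1 := hF x x₀ (1/2) (1/2) (by norm_num) (by norm_num) (by norm_num)
      refine le_trans ?_ (mul_le_mul_right h1 _)
      rw [hhf x, hhf x₀, ENNReal.ofReal_rpow_of_nonneg ENNReal.toReal_nonneg (by norm_num),
        ENNReal.ofReal_rpow_of_nonneg ENNReal.toReal_nonneg (by norm_num),
        ← ENNReal.ofReal_mul (Real.rpow_nonneg ENNReal.toReal_nonneg _),
        ← ENNReal.ofReal_mul (by positivity)]
      refine ENNReal.ofReal_le_ofReal ?_
      have hfx : 0 ≤ f x := ENNReal.toReal_nonneg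
      have hmn : 0 ≤ min (f x) t0 := le_min hfx ht0p.le
      change min (f x) t0 ≤ Real.exp (-(3 * n / 2)) * (f x ^ (1/2:ℝ) * a ^ (1/2:ℝ))
      calc min (f x) t0 = min (f x) t0 ^ (1/2:ℝ) * min (f x) t0 ^ (1/2:ℝ) := by
            rw [← Real.rpow_add_of_nonneg hmn (by norm_num) (by norm_num)]; norm_num
        _ ≤ f x ^ (1/2:ℝ) * t0 ^ (1/2:ℝ) := by
            gcongr
            · exact min_le_left _ _
            · exact min_le_right _ _
        _ = _ := by
            rw [ht0, Real.mul_rpow ha.le (by positivity), ← Real.exp_mul,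
              show -(3 * (n:ℝ)) * (1/2) = -(3 * n / 2) by ring]; ring
    refine e1.trans ((lintegral_mono e2).trans ?_)
    rw [lintegral_const_mul' _ _ ENNReal.ofReal_ne_top, lintegral_homothety h _ (by norm_num),
      ← mul_assoc, ← ENNReal.ofReal_mul (by positivity)]
    gcongr
    have := level_num n hn
    simpa using this
  have hsecond : ∫⁻ t in Set.Ioi t0, volume {x | t ≤ f x} ≤ ENNReal.ofReal (3.2 * n * b) := by
    have e1 : ∫⁻ t in Set.Ioi t0, volume {x | t ≤ f x} ≤
        ∫⁻ t in Set.Ioc t0 (1.4 * a), ENNReal.ofReal (b / t) := by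
      rw [← Set.Ioc_union_Ioi_eq_Ioi ht0a]
      refine (lintegral_union_le _ _ _).trans ?_
      have z : ∫⁻ t in Set.Ioi (1.4 * a), volume {x | t ≤ f x} = 0 := by
        rw [setLIntegral_congr_fun measurableSet_Ioi (g := fun _ => 0)]
        · simp
        · intro t ht
          have : {x | t ≤ f x} = ∅ := by
            ext x; simp only [Set.mem_ofPred_eq, Set.mem_empty_iff_false, iff_false, not_le]
            exact (hmax x).trans_lt ht
          simp [this]
      rw [z, add_zero]
      exact setLIntegral_mono' measurableSet_Ioc fun t ht => hB t (ht0p.trans ht.1)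
    refine e1.trans ?_
    have hIntg : IntegrableOn (fun t => b / t) (Set.Ioc t0 (1.4 * a)) := by
      have : IntervalIntegrable (fun t => b / t) volume t0 (1.4*a) := by
        apply ContinuousOn.intervalIntegrable
        refine continuousOn_const.div continuousOn_id fun t ht => ?_
        rw [Set.uIcc_of_le ht0a] at ht
        exact (ht0p.trans_le ht.1).ne'
      exact (intervalIntegrable_iff_integrableOn_Ioc_of_le ht0a).mp this
    rw [← ofReal_integral_eq_lintegral_ofReal hIntg]
    · refine ENNReal.ofReal_le_ofReal ?_
      rw [← intervalIntegral.integral_of_le ht0a]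
      have : ∀ t, b / t = b * (1 / t) := fun t => by ring
      simp_rw [this]
      rw [intervalIntegral.integral_const_mul, integral_one_div_of_pos ht0p (by positivity)]
      have e3 : Real.log (1.4 * a / t0) ≤ 3.2 * n := by
        have : 1.4 * a / t0 = 1.4 * Real.exp (3 * n) := by
          rw [ht0, Real.exp_neg]; field_simp
        rw [this, Real.log_mul (by norm_num) (by positivity), Real.log_exp]
        have h4 := Real.log_le_sub_one_of_pos (show (0:ℝ) < 1.4 by norm_num)
        have : (2:ℝ) ≤ n := by exact_mod_cast hn
        norm_num at h4 ⊢
        linarith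
      nlinarith
    · filter_upwards [ae_restrict_mem measurableSet_Ioc] with t ht
      have : 0 < t := ht0p.trans ht.1
      simp only [Pi.zero_apply]; positivity
  have hfinal : V ≤ ENNReal.ofReal (1/5) * V + ENNReal.ofReal (3.2 * n * b) :=
    hsplit.trans (add_le_add hfirst hsecond)
  rw [← ENNReal.ofReal_toReal hi] at hfinal ⊢
  have hv : 0 ≤ V.toReal := ENNReal.toReal_nonneg
  rw [← ENNReal.ofReal_mul (by norm_num), ← ENNReal.ofReal_add (by positivity) (by positivity),
    ENNReal.ofReal_le_ofReal_iff (by positivity)] at hfinal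
  exact ENNReal.ofReal_le_ofReal (by linarith)


lemma sel_pow (n : ℕ) (hn : 2 ≤ n) : (n:ℝ) ^ 2 * (0.182:ℝ) ^ n ≤ 0.133 := by
  induction n, hn using Nat.le_induction with
  | base => norm_num
  | succ n hn ih =>
    refine le_trans ?_ ih
    have h2 : (2:ℝ) ≤ n := by exact_mod_cast hn
    have : (0:ℝ) < 0.182 ^ n := by positivity
    rw [pow_succ]
    push_cast
    have h3 : ((n:ℝ)+1)^2 * 0.182 ≤ (n:ℝ)^2 := by nlinarith
    calc ((n:ℝ)+1)^2 * (0.182 ^ n * 0.182) = (((n:ℝ)+1)^2 * 0.182) * 0.182 ^ n := by ring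
      _ ≤ _ := by gcongr

lemma sel_num (n : ℕ) (hn : 2 ≤ n) :
    4 * n * (√((2 * Real.pi * Real.exp 1) ^ n / n.factorial) * (√n / 16) ^ n) < 1 := by
  have h2 : (2:ℝ) ≤ n := by exact_mod_cast hn
  have hst := Stirling.le_factorial_stirling n
  have hfac : (0:ℝ) < n.factorial := by exact_mod_cast n.factorial_pos
  have hs : (3.5:ℝ) ≤ √(2 * Real.pi * n) := by
    apply Real.le_sqrt_of_sq_le
    have := Real.pi_gt_d2
    nlinarith
  have key : (4 * n * (√((2 * Real.pi * Real.exp 1) ^ n / n.factorial) * (√n / 16) ^ n)) ^ 2 < 1 := by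
    have e : (4 * n * (√((2 * Real.pi * Real.exp 1) ^ n / n.factorial) * (√n / 16) ^ n)) ^ 2 =
        16 * (n:ℝ)^2 * ((2 * Real.pi * Real.exp 1 * n / 256) ^ n / n.factorial) := by
      rw [mul_pow, mul_pow, mul_pow, Real.sq_sqrt (by positivity), ← pow_mul, mul_comm n 2,
        pow_mul (√n / 16) 2 n, div_pow, Real.sq_sqrt (by positivity), div_mul_eq_mul_div,
        ← mul_pow (2 * Real.pi * Real.exp 1)]
      rw [show 2 * Real.pi * Real.exp 1 * ((n:ℝ) / 16 ^ 2) = 2 * Real.pi * Real.exp 1 * n / 256 by ring]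
      ring
    rw [e]
    have e2 : (2 * Real.pi * Real.exp 1 * n / 256) ^ n / n.factorial ≤ 0.182 ^ n / 3.5 := by
      rw [div_le_div_iff₀ hfac (by norm_num)]
      have h5 : 2 * Real.pi * Real.exp 1 * n / 256 ≤ 0.182 * (n / Real.exp 1) := by
        rw [mul_div_assoc', div_le_div_iff₀ (by norm_num) (by positivity)]
        have hp := Real.pi_lt_d2
        have he := Real.exp_one_lt_d9
        have he0 := Real.exp_pos 1
        have h6 : Real.exp 1 ^ 2 ≤ 7.3891 := by nlinarith
        have h7 : Real.pi * Real.exp 1 ^ 2 ≤ 3.15 * 7.3891 := by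
          have := Real.pi_pos; gcongr
        nlinarith
      calc (2 * Real.pi * Real.exp 1 * n / 256) ^ n * 3.5
          ≤ (0.182 * (n / Real.exp 1)) ^ n * √(2 * Real.pi * n) := by gcongr
        _ = 0.182 ^ n * (√(2 * Real.pi * n) * (n / Real.exp 1) ^ n) := by rw [mul_pow]; ring
        _ ≤ _ := by gcongr
    have := sel_pow n hn
    calc 16 * (n:ℝ)^2 * ((2 * Real.pi * Real.exp 1 * n / 256) ^ n / n.factorial)
        ≤ 16 * (n:ℝ)^2 * (0.182 ^ n / 3.5) := by gcongr
      _ = 16 / 3.5 * ((n:ℝ)^2 * 0.182 ^ n) := by ring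
      _ ≤ 16 / 3.5 * 0.133 := by gcongr
      _ < 1 := by norm_num
  exact (sq_lt_one_iff₀ (by positivity)).mp key

/-- selection of a simplex of large volume in a good level set -/
lemma selection {n : ℕ} (hn : 2 ≤ n) {h : (Fin n → ℝ) → ℝ≥0∞} (hF : LC h)
    (hm : Measurable h) (h0 : ∫⁻ x, h x ≠ 0) (hi : ∫⁻ x, h x ≠ ∞) :
    ∃ (τ : ℝ) (x₀ : Fin n → ℝ) (x : Fin n → Fin n → ℝ), 0 < τ ∧ ENNReal.ofReal τ ≤ h x₀ ∧
      (∀ i, ENNReal.ofReal τ ≤ h (x i)) ∧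
      ∫⁻ y, h y ≤ ENNReal.ofReal ((16 / √n) ^ n * τ * |(Matrix.of fun i => x i - x₀).det|) := by
  by_contra hcon
  push Not at hcon
  set v := (∫⁻ y, h y).toReal with hv
  have hv0 : 0 < v := ENNReal.toReal_pos h0 hi
  have hvV : ∫⁻ y, h y = ENNReal.ofReal v := (ENNReal.ofReal_toReal hi).symm
  obtain ⟨_, _, _, hfin⟩ := exists_near_max hF hm h0 hi
  have hnp : (0:ℝ) < n := by exact_mod_cast (by omega : 0 < n)
  have hsn : 0 < √(n:ℝ) := Real.sqrt_pos.mpr hnp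
  set Q := v * (√n / 16) ^ n with hQ
  have hQ0 : 0 < Q := by positivity
  set K := √((2 * Real.pi * Real.exp 1) ^ n / n.factorial) with hK
  have hlev := level_selection hn hF hm h0 hi (K * Q) (by positivity) (fun τ hτ => by
    by_cases hne : {x | τ ≤ (h x).toReal} = ∅
    · simp [hne]
    obtain ⟨x₀, hx₀⟩ := Set.nonempty_iff_ne_empty.mpr hne
    have hmeas : MeasurableSet {x | τ ≤ (h x).toReal} :=
      measurableSet_le measurable_const hm.ennreal_toReal
    have hx₀' : ∀ x, x ∈ {x | τ ≤ (h x).toReal} → ENNReal.ofReal τ ≤ h x := fun x hx =>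
      ENNReal.ofReal_le_of_le_toReal hx
    have hmb := moment_bound (S := (fun x => x + x₀) ⁻¹' {x | τ ≤ (h x).toReal})
      ((measurable_add_const x₀) hmeas) (Q / τ) (by positivity) (fun x hx => by
        have h1 := hcon τ x₀ (fun i => x i + x₀) hτ (hx₀' _ hx₀) (fun i => hx₀' _ (hx i))
        simp only [add_sub_cancel_right] at h1
        rw [hvV, ENNReal.ofReal_lt_ofReal_iff hv0] at h1
        rw [le_div_iff₀ hτ, hQ]
        have e : (16 / √(n:ℝ)) ^ n * (√n / 16) ^ n = 1 := by
          rw [← mul_pow]; field_simp; simp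
        have h2 := mul_lt_mul_of_pos_right h1 (show 0 < (√(n:ℝ) / 16) ^ n by positivity)
        refine le_trans (le_of_eq ?_) h2.le
        change |(Matrix.of fun i => x i).det| * τ = _
        linear_combination (-(|(Matrix.of fun i => x i).det| * τ)) * e)
    rw [measure_preimage_add_right] at hmb
    refine hmb.trans (le_of_eq ?_)
    rw [mul_div_assoc K])
  rw [hvV, ENNReal.ofReal_le_ofReal_iff (by positivity)] at hlev
  have := sel_num n hn
  rw [← hK] at this
  have h3 : 4 * n * (K * Q) = v * (4 * n * (K * (√n / 16) ^ n)) := by rw [hQ]; ring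
  rw [h3] at hlev
  nlinarith

lemma cube {n : ℕ} (hn : 2 ≤ n) {h : (Fin n → ℝ) → ℝ≥0∞} (hF : LC h)
    (hm : Measurable h) (h0 : ∫⁻ x, h x ≠ 0) (hi : ∫⁻ x, h x ≠ ∞) :
    ∃ (τ : ℝ) (L : Matrix (Fin n) (Fin n) ℝ) (p : Fin n → ℝ), 0 < τ ∧ L.det ≠ 0 ∧
      (∀ y : Fin n → ℝ, (∀ i, p i ≤ y i ∧ y i ≤ p i + 1) → ENNReal.ofReal τ ≤ h (L.mulVec y)) ∧
      ∫⁻ y, h (L.mulVec y) ≤ ENNReal.ofReal ((16 * √n) ^ n * τ) := by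
  obtain ⟨τ, x₀, x, hτ, hx₀, hx, hV⟩ := selection hn hF hm h0 hi
  have hnp : (0:ℝ) < n := by exact_mod_cast (by omega : 0 < n)
  have hsn : 0 < √(n:ℝ) := Real.sqrt_pos.mpr hnp
  set D : Matrix (Fin n) (Fin n) ℝ := Matrix.of fun i => x i - x₀ with hD
  have hdet : D.det ≠ 0 := by
    intro hd
    rw [hd] at hV
    simp at hV
    exact h0 hV
  set L : Matrix (Fin n) (Fin n) ℝ := (1 / n : ℝ) • D.transpose with hL
  have hLdet : L.det = (1 / n : ℝ) ^ n * D.det := by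
    rw [hL, Matrix.det_smul, Matrix.det_transpose, Fintype.card_fin]
  have hL0 : L.det ≠ 0 := by rw [hLdet]; positivity
  have hLy : ∀ y, L.mulVec y = ∑ i, (1 / n : ℝ) • (y i • (x i - x₀)) := by
    intro y
    rw [hL, Matrix.smul_mulVec, ← Finset.smul_sum]
    congr 1
    ext j
    simp [Matrix.mulVec, dotProduct, hD, Matrix.transpose_apply, mul_comm]
  refine ⟨τ, L, L⁻¹.mulVec x₀, hτ, hL0, ?_, ?_⟩
  · intro y hy
    set p := L⁻¹.mulVec x₀ with hp
    have hLp : L.mulVec p = x₀ := by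
      rw [hp, Matrix.mulVec_mulVec, Matrix.mul_nonsing_inv _ (isUnit_iff_ne_zero.mpr hL0),
        Matrix.one_mulVec]
    have hsum1 : ∑ _i : Fin n, (1 / n : ℝ) = 1 := by simp; field_simp
    have e : L.mulVec y = ∑ i, (1 / n : ℝ) • ((1 - (y i - p i)) • x₀ + (y i - p i) • x i) := by
      have e1 : L.mulVec y = x₀ + L.mulVec (y - p) := by rw [Matrix.mulVec_sub, hLp]; abel
      rw [e1, hLy]
      have e2 : x₀ = ∑ _i : Fin n, (1 / n : ℝ) • x₀ := by rw [← Finset.sum_smul, hsum1, one_smul]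
      conv_lhs => rw [e2]
      rw [← Finset.sum_add_distrib, ← e2]
      refine Finset.sum_congr rfl fun i _ => ?_
      rw [← smul_add]; congr 1
      simp only [Pi.sub_apply, sub_smul, smul_sub, one_smul]; abel
    have hconv := hF.convex_le (ENNReal.ofReal τ)
    have hmem : L.mulVec y ∈ {x | ENNReal.ofReal τ ≤ h x} := by
      rw [e]
      refine hconv.sum_mem (fun i _ => by positivity) hsum1 fun i _ => ?_
      have := hy i
      exact hconv hx₀ (hx i) (by linarith) (by linarith) (by ring)
    exact hmem
  · have hmap := Real.map_matrix_volume_pi_eq_smul_volume_pi hL0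
    have e1 : ∫⁻ y, h (L.mulVec y) = ∫⁻ z, h z ∂(Measure.map (Matrix.toLin' L) volume) := by
      rw [lintegral_map hm (LinearMap.continuous_of_finiteDimensional _).measurable]
      rfl
    rw [e1, hmap, lintegral_smul_measure]
    refine (mul_le_mul_right hV _).trans ?_
    rw [← ENNReal.ofReal_mul (by positivity)]
    refine ENNReal.ofReal_le_ofReal (le_of_eq ?_)
    rw [hLdet, abs_inv, abs_mul, abs_of_pos (show (0:ℝ) < (1 / n) ^ n by positivity)]
    have hda : |D.det| ≠ 0 := by positivity
    have : (1 / (n:ℝ)) ^ n * (16 * √n) ^ n = (16 / √n) ^ n := by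
      rw [← mul_pow]; congr 1
      field_simp
      rw [Real.sq_sqrt hnp.le]
    rw [← this]
    field_simp


lemma amgm {α : Type*} (T : Finset α) (hT : T.card ≠ 0) (z : α → ℝ≥0∞) :
    ∏ a ∈ T, z a ^ (1 / (T.card : ℝ)) ≤ (T.card : ℝ≥0∞)⁻¹ * ∑ a ∈ T, z a := by
  classical
  by_cases htop : ∃ a ∈ T, z a = ∞
  · obtain ⟨a, ha, haz⟩ := htop
    have : ∑ a ∈ T, z a = ∞ := by
      rw [ENNReal.sum_eq_top]; exact ⟨a, ha, haz⟩
    rw [this, ENNReal.mul_top]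
    · exact le_top
    · simp
  · push Not at htop
    have h := NNReal.geom_mean_le_arith_mean_weighted T (fun _ => (T.card : NNReal)⁻¹)
      (fun a => (z a).toNNReal) (by simp [hT])
    have hc : (T.card : NNReal) ≠ 0 := by exact_mod_cast hT
    have h2 := ENNReal.coe_le_coe.mpr h
    rw [← Finset.mul_sum] at h2
    push_cast at h2
    rw [ENNReal.coe_inv hc] at h2
    have e1 : ∑ a ∈ T, ((z a).toNNReal : ℝ≥0∞) = ∑ a ∈ T, z a :=
      Finset.sum_congr rfl fun a ha => ENNReal.coe_toNNReal (htop a ha)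
    have e2 : ∏ a ∈ T, (((z a).toNNReal ^ ((T.card : ℝ)⁻¹) : NNReal) : ℝ≥0∞) =
        ∏ a ∈ T, z a ^ (1 / (T.card : ℝ)) := by
      refine Finset.prod_congr rfl fun a ha => ?_
      rw [ENNReal.coe_rpow_of_nonneg _ (by positivity), ENNReal.coe_toNNReal (htop a ha), one_div]
    rw [e1, e2] at h2
    simpa using h2

/-- integral of coordinate projection -/
def AI {n : ℕ} (I : Finset (Fin n)) (F : (Fin n → ℝ) → ℝ≥0∞) : ℝ≥0∞ :=
  lmarginal (vol1 n) I (supMarg Iᶜ F) 0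

lemma le_supMarg {n : ℕ} (J : Finset (Fin n)) (F : (Fin n → ℝ) → ℝ≥0∞) (x) : F x ≤ supMarg J F x :=
  le_iSup_of_le x (le_of_eq (by rw [Finset.piecewise_same]))

lemma supMarg_update {n : ℕ} (J : Finset (Fin n)) (F : (Fin n → ℝ) → ℝ≥0∞) (i) (hi : i ∈ J) (x b) :
    supMarg J F (Function.update x i b) = supMarg J F x := by
  unfold supMarg
  congr 1; ext z; congr 1; ext j
  by_cases hj : j ∈ J
  · simp [hj]
  · have : j ≠ i := fun h => hj (h ▸ hi)
    simp [hj, this]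

lemma choose_ratio {n k : ℕ} (hk : 1 ≤ k) (hkn : k ≤ n) :
    (n.choose k : ℝ) * k = n * ((n-1).choose (k-1) : ℝ) := by
  obtain ⟨k, rfl⟩ := Nat.exists_eq_add_of_le' hk
  obtain ⟨n, rfl⟩ := Nat.exists_eq_add_of_le' (show 1 ≤ n by omega)
  have := Nat.add_one_mul_choose_eq n k
  simp only [Nat.add_sub_cancel]
  exact_mod_cast this.symm

lemma finner_A {n k : ℕ} (hk : 1 ≤ k) (hkn : k ≤ n) {F : (Fin n → ℝ) → ℝ≥0∞}
    (hF : LowerSemicontinuous F) :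
    (∫⁻ x, F x ^ ((n:ℝ) / k)) ^ ((k:ℝ) / n) ≤
      ∏ I ∈ Finset.powersetCard k Finset.univ, AI I F ^ (1 / (n.choose k : ℝ)) := by
  set m := (n-1).choose (k-1) with hm
  have hm0 : 0 < m := Nat.choose_pos (by omega)
  have hN0 : 0 < n.choose k := Nat.choose_pos hkn
  have hkp : (0:ℝ) < k := by exact_mod_cast hk
  have hnp : (0:ℝ) < n := by exact_mod_cast (by omega : 0 < n)
  have hmp : (0:ℝ) < m := by exact_mod_cast hm0
  have hNp : (0:ℝ) < n.choose k := by exact_mod_cast hN0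
  have hr := choose_ratio hk hkn
  rw [← hm] at hr
  have h := finner (Finset.powersetCard k (Finset.univ : Finset (Fin n))) (fun I => I) m hm0
    (fun I => supMarg Iᶜ F) (fun I _ => (supMarg_lsc Iᶜ hF).measurable)
    (fun I _ i hi x b => supMarg_update _ F i (by simpa using hi) x b)
    (fun i => by
      have := Finset.card_filter_powersetCard_subset {i} (Finset.univ : Finset (Fin n)) k
      simp only [Finset.singleton_subset_iff] at this
      rw [this (by simp) (by simpa using hk)]; simp [hm]) Finset.univ 0
  simp only [Finset.inter_univ] at h
  rw [lmarginal_univ] at h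
  have h1 : ∫⁻ x, F x ^ ((n:ℝ) / k) ≤
      ∏ I ∈ Finset.powersetCard k Finset.univ, AI I F ^ (1 / (m : ℝ)) := by
    refine le_trans (lintegral_mono fun x => ?_) h
    calc F x ^ ((n:ℝ) / k) = ∏ _I ∈ Finset.powersetCard k (Finset.univ : Finset (Fin n)),
          F x ^ (1 / (m : ℝ)) := by
          rw [Finset.prod_const, Finset.card_powersetCard, Finset.card_univ, Fintype.card_fin,
            ← ENNReal.rpow_natCast, ← ENNReal.rpow_mul]
          congr 1; field_simp; linarith
      _ ≤ _ := Finset.prod_le_prod' fun I _ => by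
          gcongr; exact le_supMarg _ _ _
  calc _ ≤ (∏ I ∈ Finset.powersetCard k Finset.univ, AI I F ^ (1 / (m : ℝ))) ^ ((k:ℝ)/n) := by
        gcongr
    _ = _ := by
        rw [← ENNReal.prod_rpow_of_nonneg (by positivity)]
        refine Finset.prod_congr rfl fun I _ => ?_
        rw [← ENNReal.rpow_mul]
        congr 1; field_simp; linarith

lemma box_A {n k : ℕ} (hk : 1 ≤ k) (hkn : k < n) {F : (Fin n → ℝ) → ℝ≥0∞}
    (hF : LowerSemicontinuous F) (hLC : LC F) (p : Fin n → ℝ) (r : ℝ) (hr : 0 < r) (c : ℝ≥0∞)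
    (hc : ∀ y : Fin n → ℝ, (∀ i, p i ≤ y i ∧ y i ≤ p i + r) → c ≤ F y) :
    ENNReal.ofReal (r * (n - k) / k) ^ (n - k) *
      (∑ I ∈ Finset.powersetCard k Finset.univ, AI I F) * c ^ (((n:ℝ) - k) / k) ≤
      ENNReal.ofReal (((k:ℝ) / n) ^ n)⁻¹ * ∫⁻ x, F x ^ ((n:ℝ) / k) := by
  have hkp : (0:ℝ) < k := by exact_mod_cast hk
  have hnp : (0:ℝ) < n := by exact_mod_cast (by omega : 0 < n)
  have hjp : (0:ℝ) < (n:ℝ) - k := by have : (k:ℝ) < n := by exact_mod_cast hkn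
                                     linarith
  set t := r * (n - k) / k with ht
  have ht0 : 0 < t := by positivity
  have hbox := box_expansion t ht0.le Finset.univ F hF 0
  rw [lmarginal_univ] at hbox
  have h1 : ENNReal.ofReal t ^ (n - k) * (∑ I ∈ Finset.powersetCard k Finset.univ, AI I F) ≤
      ∫⁻ x, boxSup t Finset.univ F x := by
    refine le_trans ?_ hbox
    rw [Finset.mul_sum]
    refine le_trans (le_of_eq ?_) (Finset.sum_le_sum_of_subset
      (s := Finset.powersetCard k Finset.univ) ?_)
    · refine Finset.sum_congr rfl fun I hI => ?_
      rw [Finset.mem_powersetCard] at hI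
      rw [Finset.card_sdiff_of_subset (Finset.subset_univ _), hI.2, Finset.card_univ, Fintype.card_fin]
      rfl
    · intro I _; simp
  refine (mul_le_mul_left h1 _).trans ?_
  have h2 : ∀ q, boxSup t Finset.univ F q * c ^ (((n:ℝ) - k) / k) ≤
      F (((k:ℝ) / n) • q + (((n:ℝ) - k) / n) • p) ^ ((n:ℝ) / k) := by
    intro q
    unfold boxSup
    rw [ENNReal.iSup_mul]
    refine iSup_le fun u => ?_
    set w : Fin n → ℝ := p + ((k:ℝ) / (n - k)) • u.1 with hw
    have hwc : c ≤ F w := hc w fun i => by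
      have := u.2 i
      simp only [hw, Pi.add_apply, Pi.smul_apply, smul_eq_mul]
      constructor
      · have : 0 ≤ (k:ℝ) / (n - k) * u.1 i := mul_nonneg (by positivity) this.1
        linarith
      · have h3 : (k:ℝ) / (n - k) * u.1 i ≤ (k:ℝ) / (n - k) * t := by gcongr; exact this.2
        have h4 : (k:ℝ) / (n - k) * t = r := by rw [ht]; field_simp
        linarith
    have h3 := hLC (q - Finset.univ.piecewise u.1 0) w (k / n) ((n - k) / n) (by positivity)
      (by positivity) (by field_simp; ring)
    have h4 : ((k:ℝ) / n) • (q - Finset.univ.piecewise u.1 0) + (((n:ℝ) - k) / n) • w =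
        ((k:ℝ) / n) • q + (((n:ℝ) - k) / n) • p := by
      ext i
      simp [hw]
      field_simp; ring
    rw [h4] at h3
    refine le_trans ?_ (ENNReal.rpow_le_rpow h3 (show 0 ≤ (n:ℝ)/k by positivity))
    rw [ENNReal.mul_rpow_of_nonneg _ _ (by positivity), ← ENNReal.rpow_mul, ← ENNReal.rpow_mul]
    have e1 : (k:ℝ) / n * (n / k) = 1 := by field_simp
    have e2 : ((n:ℝ) - k) / n * (n / k) = (n - k) / k := by field_simp
    rw [e1, e2, ENNReal.rpow_one]
    gcongr
  have h5 := lintegral_homothety (fun x => F x ^ ((n:ℝ)/k)) ((k:ℝ)/n) (by positivity)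
    ((((n:ℝ) - k) / n) • p)
  rw [Fintype.card_fin] at h5
  rw [← h5, ← lintegral_mul_const _ (boxSup_lsc _ _ hF).measurable]
  exact lintegral_mono h2

lemma choose_ge (j : ℕ) : ∀ n : ℕ, j ≤ n → (n:ℝ) ^ j ≤ n.choose j * (j:ℝ) ^ j := by
  induction j with
  | zero => intro n _; simp
  | succ j ih =>
    intro n hn
    obtain ⟨n, rfl⟩ := Nat.exists_eq_add_of_le' (show 1 ≤ n by omega)
    have hjn : j ≤ n := by omega
    have h1 : ((n:ℝ)+1) * n.choose j = (n+1).choose (j+1) * ((j:ℝ)+1) := by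
      exact_mod_cast Nat.add_one_mul_choose_eq n j
    have h2 : ((n:ℝ)+1) ^ j ≤ n.choose j * ((j:ℝ)+1) ^ j := by
      rcases Nat.eq_zero_or_pos j with rfl | hj
      · simp
      have hjp : (0:ℝ) < j := by exact_mod_cast hj
      have hjn' : (j:ℝ) ≤ n := by exact_mod_cast hjn
      refine le_of_mul_le_mul_right ?_ (show (0:ℝ) < (j:ℝ)^j by positivity)
      calc ((n:ℝ)+1) ^ j * (j:ℝ)^j = (((n:ℝ)+1) * j) ^ j := by rw [mul_pow]
        _ ≤ ((n:ℝ) * (j+1)) ^ j := by gcongr ?_ ^ j; nlinarith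
        _ = (n:ℝ)^j * ((j:ℝ)+1)^j := by rw [mul_pow]
        _ ≤ (n.choose j * (j:ℝ) ^ j) * ((j:ℝ)+1)^j := by gcongr; exact ih n hjn
        _ = _ := by ring
    push_cast
    calc ((n:ℝ)+1) ^ (j+1) = ((n:ℝ)+1) * ((n:ℝ)+1) ^ j := by ring
      _ ≤ ((n:ℝ)+1) * (n.choose j * ((j:ℝ)+1) ^ j) := by gcongr
      _ = (((n:ℝ)+1) * n.choose j) * ((j:ℝ)+1) ^ j := by ring
      _ = _ := by rw [h1]; ring

lemma box_num {n k : ℕ} (hk : 1 ≤ k) (hkn : k < n) :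
    (((k:ℝ) / n) ^ n)⁻¹ ≤ (Real.exp 1 ^ (n - k) * n.choose k) * (1 * ((n:ℝ) - k) / k) ^ (n - k) := by
  have hkp : (0:ℝ) < k := by exact_mod_cast hk
  have hnp : (0:ℝ) < n := by exact_mod_cast (by omega : 0 < n)
  obtain ⟨j, rfl⟩ := Nat.exists_eq_add_of_lt hkn
  set J := j + 1 with hJ
  have e0 : k + j + 1 = k + J := by omega
  rw [e0, Nat.add_sub_cancel_left]
  have hJp : (0:ℝ) < J := by positivity
  have e1 : ((k + J : ℕ):ℝ) - k = J := by push_cast; ring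
  rw [e1, one_mul]
  have h1 := choose_ge J (k + J) (by omega)
  have h2 : (((k + J : ℕ):ℝ) / k) ^ k ≤ Real.exp 1 ^ J := by
    have : ((k + J : ℕ):ℝ) / k ≤ Real.exp (J / k) := by
      have := Real.add_one_le_exp ((J:ℝ)/k)
      refine le_trans (le_of_eq ?_) this
      push_cast; field_simp; ring
    calc (((k + J : ℕ):ℝ) / k) ^ k ≤ Real.exp (J / k) ^ k := by gcongr
      _ = _ := by rw [← Real.exp_nat_mul, ← Real.exp_nat_mul]; congr 1; field_simp
  have h3 : (((k + J : ℕ):ℝ) / k) ^ J ≤ (k + J).choose k * ((J:ℝ) / k) ^ J := by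
    rw [Nat.choose_symm_add, div_pow, div_pow, mul_div_assoc']
    gcongr
  calc ((k / ((k + J : ℕ):ℝ)) ^ (k + J))⁻¹ = (((k + J : ℕ):ℝ) / k) ^ k * (((k + J : ℕ):ℝ) / k) ^ J := by
        rw [← pow_add, ← inv_pow, inv_div]
    _ ≤ Real.exp 1 ^ J * ((k + J).choose k * ((J:ℝ) / k) ^ J) := by gcongr
    _ = _ := by ring

/-- the core inequality for lower semicontinuous functions -/
lemma core_lsc {n k : ℕ} (hk : 1 ≤ k) (hkn : k < n) {F G : (Fin n → ℝ) → ℝ≥0∞}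
    (hF : LowerSemicontinuous F) (hG : LowerSemicontinuous G) (hLC : LC G) (p : Fin n → ℝ)
    (c : ℝ≥0∞) (hc : ∀ y : Fin n → ℝ, (∀ i, p i ≤ y i ∧ y i ≤ p i + 1) → c ≤ G y)
    (θ : ℝ≥0∞) (hA : ∀ I ∈ Finset.powersetCard k Finset.univ, AI I F ≤ θ * AI I G) :
    (∫⁻ x, F x ^ ((n:ℝ) / k)) ^ ((k:ℝ) / n) * c ^ (((n:ℝ) - k) / k) ≤
      θ * ENNReal.ofReal (Real.exp 1 ^ (n - k)) * ∫⁻ x, G x ^ ((n:ℝ) / k) := by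
  have hkp : (0:ℝ) < k := by exact_mod_cast hk
  have hN0 : 0 < n.choose k := Nat.choose_pos hkn.le
  have hcard : (Finset.powersetCard k (Finset.univ : Finset (Fin n))).card = n.choose k := by simp
  have h1 := finner_A hk hkn.le hF
  have h2 := amgm (Finset.powersetCard k (Finset.univ : Finset (Fin n))) (by rw [hcard]; omega)
    (fun I => AI I F)
  rw [hcard] at h2
  have h3 := box_A hk hkn hG hLC p 1 one_pos c hc
  set S := ∑ I ∈ Finset.powersetCard k Finset.univ, AI I G
  set Y := ∫⁻ x, G x ^ ((n:ℝ) / k)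
  set C := c ^ (((n:ℝ) - k) / k)
  have h4 : ∑ I ∈ Finset.powersetCard k Finset.univ, AI I F ≤ θ * S := by
    rw [Finset.mul_sum]; exact Finset.sum_le_sum hA
  have hjp : (0:ℝ) < (n:ℝ) - k := by have : (k:ℝ) < n := by exact_mod_cast hkn
                                     linarith
  set t : ℝ := 1 * ((n:ℝ) - k) / k with ht
  have ht0 : 0 < t := by positivity
  have h5 : S * C ≤ ENNReal.ofReal (Real.exp 1 ^ (n - k) * n.choose k) * Y := by
    have hT0 : ENNReal.ofReal t ^ (n - k) ≠ 0 := by simp [ht0]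
    have hT1 : ENNReal.ofReal t ^ (n - k) ≠ ∞ := by simp
    rw [← ENNReal.mul_le_mul_iff_right hT0 hT1, ← mul_assoc, ← mul_assoc]
    refine h3.trans ?_
    gcongr
    rw [← ENNReal.ofReal_pow ht0.le, ← ENNReal.ofReal_mul (by positivity)]
    refine ENNReal.ofReal_le_ofReal ?_
    rw [mul_comm]
    exact box_num hk hkn
  calc (∫⁻ x, F x ^ ((n:ℝ) / k)) ^ ((k:ℝ) / n) * C
      ≤ ((n.choose k : ℝ≥0∞)⁻¹ * (θ * S)) * C := by
        gcongr; exact h1.trans (h2.trans (by gcongr))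
    _ = θ * (n.choose k : ℝ≥0∞)⁻¹ * (S * C) := by ring
    _ ≤ θ * (n.choose k : ℝ≥0∞)⁻¹ * (ENNReal.ofReal (Real.exp 1 ^ (n - k) * n.choose k) * Y) := by
        gcongr
    _ = θ * ENNReal.ofReal (Real.exp 1 ^ (n - k)) * ((n.choose k : ℝ≥0∞)⁻¹ * n.choose k) * Y := by
        rw [ENNReal.ofReal_mul (by positivity), ENNReal.ofReal_natCast]; ring
    _ = _ := by
        rw [ENNReal.inv_mul_cancel (by exact_mod_cast hN0.ne') (by simp), mul_one]


lemma AI_mono {n : ℕ} (I : Finset (Fin n)) {F G : (Fin n → ℝ) → ℝ≥0∞} (h : ∀ x, F x ≤ G x) :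
    AI I F ≤ AI I G := by
  unfold AI
  refine lmarginal_mono (fun x => ?_) 0
  exact iSup_mono fun z => h _

lemma AI_eq {n : ℕ} (I : Finset (Fin n)) (F : (Fin n → ℝ) → ℝ≥0∞) :
    AI I F = ∫⁻ y : I → ℝ, supMarg Iᶜ F (Function.updateFinset 0 I y) := rfl

lemma AI_reg {n : ℕ} (I : Finset (Fin n)) {F : (Fin n → ℝ) → ℝ≥0∞} (hF : LC F) {x₁ : Fin n → ℝ}
    {r : ℝ} {δ M : ℝ≥0∞}
    (hr : 0 < r) (hδ0 : δ ≠ 0) (hδ1 : δ ≠ ∞) (hball : ∀ x ∈ Metric.ball x₁ r, δ ≤ F x)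
    (hM : ∀ x, F x ≤ M) (hM1 : M ≠ ∞) {l : ℝ} (hl0 : 0 < l) (hl1 : l < 1) :
    AI I (reg (l / (1 - l) * r) F) ≤
      (M / δ) ^ l * (ENNReal.ofReal (((1 - l) ^ I.card)⁻¹) * AI I F) := by
  rw [AI_eq, AI_eq]
  have hh := lintegral_homothety (ι := I) (fun y => supMarg Iᶜ F (Function.updateFinset 0 I y))
    (1 - l) (by linarith) (fun i => l * x₁ i)
  rw [Fintype.card_coe] at hh
  rw [← hh, ← lintegral_const_mul' _ _ (ENNReal.rpow_ne_top_of_nonneg hl0.le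
    (ENNReal.div_ne_top hM1 hδ0))]
  refine lintegral_mono fun y => ?_
  unfold supMarg
  refine iSup_le fun z => ?_
  refine (reg_le hF hr hδ0 hδ1 hball hM hl0 hl1 _).trans ?_
  gcongr
  refine le_iSup_of_le ((1 - l) • z + l • x₁) (le_of_eq ?_)
  congr 1
  ext i
  by_cases hi : i ∈ I
  · simp [hi, Function.updateFinset]
  · simp [hi]

lemma pow_reg {n : ℕ} {F : (Fin n → ℝ) → ℝ≥0∞} (hF : LC F) {x₁ : Fin n → ℝ}
    {r : ℝ} {δ M : ℝ≥0∞}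
    (hr : 0 < r) (hδ0 : δ ≠ 0) (hδ1 : δ ≠ ∞) (hball : ∀ x ∈ Metric.ball x₁ r, δ ≤ F x)
    (hM : ∀ x, F x ≤ M) (hM1 : M ≠ ∞) {l : ℝ} (hl0 : 0 < l) (hl1 : l < 1) (p : ℝ) (hp : 0 ≤ p) :
    ∫⁻ x, reg (l / (1 - l) * r) F x ^ p ≤
      (M / δ) ^ (l * p) * (ENNReal.ofReal (((1 - l) ^ n)⁻¹) * ∫⁻ x, F x ^ p) := by
  have hh := lintegral_homothety (fun y => F y ^ p) (1 - l) (by linarith) (l • x₁)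
  rw [Fintype.card_fin] at hh
  rw [← hh, ← lintegral_const_mul' _ _ (ENNReal.rpow_ne_top_of_nonneg (by positivity)
    (ENNReal.div_ne_top hM1 hδ0))]
  refine lintegral_mono fun y => ?_
  rw [ENNReal.rpow_mul, ← ENNReal.mul_rpow_of_nonneg _ _ hp]
  exact ENNReal.rpow_le_rpow (reg_le hF hr hδ0 hδ1 hball hM hl0 hl1 _) hp

lemma pow_int_finite {n : ℕ} {F : (Fin n → ℝ) → ℝ≥0∞} {M : ℝ≥0∞} (hM : ∀ x, F x ≤ M) (hM1 : M ≠ ∞)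
    (hi : ∫⁻ x, F x ≠ ∞) (p : ℝ) (hp : 1 ≤ p) : ∫⁻ x, F x ^ p ≠ ∞ := by
  have : ∫⁻ x, F x ^ p ≤ M ^ (p - 1) * ∫⁻ x, F x := by
    rw [← lintegral_const_mul' _ _ (ENNReal.rpow_ne_top_of_nonneg (by linarith) hM1)]
    refine lintegral_mono fun x => ?_
    calc F x ^ p = F x ^ (p - 1) * F x ^ (1:ℝ) := by
          rw [← ENNReal.rpow_add_of_nonneg _ _ (by linarith) (by norm_num)]; congr 1; ring
      _ ≤ _ := by
          rw [ENNReal.rpow_one]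
          have : 0 ≤ p - 1 := by linarith
          gcongr; exact hM x
  exact ne_top_of_le_ne_top (ENNReal.mul_ne_top (ENNReal.rpow_ne_top_of_nonneg (by linarith) hM1) hi)
    this

lemma AI_finite {n k : ℕ} (hk : 1 ≤ k) (hkn : k < n) {F : (Fin n → ℝ) → ℝ≥0∞} (hF : LC F)
    (hm : Measurable F) (h0 : ∫⁻ x, F x ≠ 0) (hi : ∫⁻ x, F x ≠ ∞) (I : Finset (Fin n))
    (hI : I.card = k) : AI I F ≠ ∞ := by
  obtain ⟨M, hM1, hM0, hM⟩ := hF.bounded hm h0 hi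
  obtain ⟨x₁, r, δ, hr, hδ0, hδ1, hball⟩ := hF.exists_ball hm h0
  have hkp : (0:ℝ) < k := by exact_mod_cast hk
  have hkn' : (k:ℝ) < n := by exact_mod_cast hkn
  have hp : 1 ≤ (n:ℝ)/k := by rw [le_div_iff₀ hkp]; linarith
  have hreg := pow_reg hF hr hδ0 hδ1 hball hM hM1 (l := 1/2) (by norm_num) (by norm_num) ((n:ℝ)/k)
    (by linarith)
  set ε := (1/2 : ℝ) / (1 - 1/2) * r with hε
  have hεp : 0 < ε := by rw [hε]; positivity
  have hfin : ∫⁻ x, reg ε F x ^ ((n:ℝ)/k) ≠ ∞ := by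
    refine ne_top_of_le_ne_top (ENNReal.mul_ne_top (ENNReal.rpow_ne_top_of_nonneg (by positivity)
      (ENNReal.div_ne_top hM1 hδ0)) (ENNReal.mul_ne_top ENNReal.ofReal_ne_top
      (pow_int_finite hM hM1 hi _ hp))) hreg
  have hbox := box_A hk hkn (reg_lsc ε F) (reg_LC hF) x₁ (r/2) (by positivity) δ (fun y hy => by
    refine (hball y ?_).trans (le_reg hεp F y)
    rw [Metric.mem_ball, dist_pi_lt_iff hr]
    intro i
    rw [Real.dist_eq, abs_lt]
    have := hy i
    constructor <;> linarith)
  have hS : ∑ I ∈ Finset.powersetCard k Finset.univ, AI I (reg ε F) ≠ ∞ := by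
    intro htop
    rw [htop, ENNReal.mul_top, ENNReal.top_mul] at hbox
    · exact (ENNReal.mul_ne_top ENNReal.ofReal_ne_top hfin) (top_le_iff.mp hbox)
    · simp [ENNReal.rpow_eq_zero_iff, hδ0, hδ1]
    · have : 0 < r / 2 * ((n:ℝ) - k) / k := by
        have : 0 < (n:ℝ) - k := by linarith
        positivity
      simp [this]
  refine ne_top_of_le_ne_top hS ((AI_mono I (le_reg hεp F)).trans ?_)
  exact Finset.single_le_sum (f := fun I => AI I (reg ε F)) (fun _ _ => zero_le)
    (by simp [Finset.mem_powersetCard, hI])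

lemma core {n k : ℕ} (hk : 1 ≤ k) (hkn : k < n) {F G : (Fin n → ℝ) → ℝ≥0∞}
    (hF : LC F) (hFm : Measurable F) (hF0 : ∫⁻ x, F x ≠ 0) (hFi : ∫⁻ x, F x ≠ ∞)
    (hG : LC G) (hGm : Measurable G) (hG0 : ∫⁻ x, G x ≠ 0) (hGi : ∫⁻ x, G x ≠ ∞)
    (p : Fin n → ℝ)
    (c : ℝ≥0∞) (hc : ∀ y : Fin n → ℝ, (∀ i, p i ≤ y i ∧ y i ≤ p i + 1) → c ≤ G y)
    (hA : ∀ I ∈ Finset.powersetCard k Finset.univ, AI I F ≤ AI I G) :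
    (∫⁻ x, F x ^ ((n:ℝ) / k)) ^ ((k:ℝ) / n) * c ^ (((n:ℝ) - k) / k) ≤
      ENNReal.ofReal (Real.exp 1 ^ (n - k)) * ∫⁻ x, G x ^ ((n:ℝ) / k) := by
  obtain ⟨M, hM1, hM0, hM⟩ := hF.bounded hFm hF0 hFi
  obtain ⟨x₁, r, δ, hr, hδ0, hδ1, hball⟩ := hF.exists_ball hFm hF0
  obtain ⟨M', hM1', hM0', hM'⟩ := hG.bounded hGm hG0 hGi
  obtain ⟨x₁', r', δ', hr', hδ0', hδ1', hball'⟩ := hG.exists_ball hGm hG0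
  have hkp : (0:ℝ) < k := by exact_mod_cast hk
  set q := (M / δ).toReal with hq
  set q' := (M' / δ').toReal with hq'
  have hqp : 0 < q := ENNReal.toReal_pos (ENNReal.div_ne_zero.mpr ⟨hM0, hδ1⟩) (ENNReal.div_ne_top hM1 hδ0)
  have hqp' : 0 < q' := ENNReal.toReal_pos (ENNReal.div_ne_zero.mpr ⟨hM0', hδ1'⟩)
    (ENNReal.div_ne_top hM1' hδ0')
  have hqe : M / δ = ENNReal.ofReal q := (ENNReal.ofReal_toReal (ENNReal.div_ne_top hM1 hδ0)).symm
  have hqe' : M' / δ' = ENNReal.ofReal q' :=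
    (ENNReal.ofReal_toReal (ENNReal.div_ne_top hM1' hδ0')).symm
  set X := (∫⁻ x, F x ^ ((n:ℝ) / k)) ^ ((k:ℝ) / n) * c ^ (((n:ℝ) - k) / k) with hX
  set Y := ∫⁻ x, G x ^ ((n:ℝ) / k) with hY
  set K : ℝ → ℝ := fun l => (q ^ l * ((1 - l) ^ k)⁻¹) * (q' ^ (l * (n / k)) * ((1 - l) ^ n)⁻¹) with hK
  have hbound : ∀ l : ℝ, 0 < l → l < 1 →
      X ≤ ENNReal.ofReal (K l) * (ENNReal.ofReal (Real.exp 1 ^ (n - k)) * Y) := by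
    intro l hl0 hl1
    have hl : 0 < 1 - l := by linarith
    have hε : 0 < l / (1 - l) * r := by positivity
    have hε' : 0 < l / (1 - l) * r' := by positivity
    have h1 := core_lsc hk hkn (reg_lsc (l / (1 - l) * r) F) (reg_lsc (l / (1 - l) * r') G)
      (reg_LC hG) p c (fun y hy => (hc y hy).trans (le_reg hε' G y))
      ((M / δ) ^ l * ENNReal.ofReal (((1 - l) ^ k)⁻¹)) (fun I hI => by
        have h2 := AI_reg I hF hr hδ0 hδ1 hball hM hM1 hl0 hl1
        rw [(Finset.mem_powersetCard.mp hI).2, ← mul_assoc] at h2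
        refine h2.trans ?_
        gcongr
        exact (hA I hI).trans (AI_mono I (le_reg hε' G)))
    have h3 := pow_reg hG hr' hδ0' hδ1' hball' hM' hM1' hl0 hl1 ((n:ℝ)/k) (by positivity)
    calc X ≤ (∫⁻ x, reg (l / (1 - l) * r) F x ^ ((n:ℝ) / k)) ^ ((k:ℝ) / n) *
            c ^ (((n:ℝ) - k) / k) := by
          rw [hX]; gcongr with x; exact le_reg hε F x
      _ ≤ _ := h1
      _ ≤ _ := mul_le_mul_right h3 _
      _ = _ := by
        rw [hqe, hqe', ENNReal.ofReal_rpow_of_pos hqp, ENNReal.ofReal_rpow_of_pos hqp', hK,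
          ENNReal.ofReal_mul (by positivity), ENNReal.ofReal_mul (by positivity),
          ENNReal.ofReal_mul (by positivity)]
        ring
  have hKc : Filter.Tendsto K (nhdsWithin 0 (Set.Ioi 0)) (nhds (K 0)) := by
    have : ContinuousAt K 0 := by
      rw [hK]
      refine ContinuousAt.mul (ContinuousAt.mul ?_ ?_) (ContinuousAt.mul ?_ ?_)
      · exact continuousAt_const.rpow continuousAt_id (Or.inl hqp.ne')
      · exact ContinuousAt.inv₀ (by fun_prop) (by simp)
      · exact continuousAt_const.rpow (by fun_prop) (Or.inl hqp'.ne')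
      · exact ContinuousAt.inv₀ (by fun_prop) (by simp)
    exact this.tendsto.mono_left nhdsWithin_le_nhds
  have hK0 : K 0 = 1 := by simp [hK]
  rw [hK0] at hKc
  have hlim := ENNReal.Tendsto.mul_const (b := ENNReal.ofReal (Real.exp 1 ^ (n - k)) * Y)
    (ENNReal.tendsto_ofReal hKc) (Or.inl (by simp))
  rw [ENNReal.ofReal_one, one_mul] at hlim
  refine ge_of_tendsto hlim ?_
  filter_upwards [Ioo_mem_nhdsGT (show (0:ℝ) < 1 by norm_num)] with l hl
  exact hbound l hl.1 hl.2


/-- extension by zero -/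
def extz {n : ℕ} (I : Finset (Fin n)) : (I → ℝ) →ₗ[ℝ] (Fin n → ℝ) where
  toFun y := Function.updateFinset 0 I y
  map_add' y z := by
    ext i; by_cases hi : i ∈ I <;> simp [Function.updateFinset, hi]
  map_smul' c y := by
    ext i; by_cases hi : i ∈ I <;> simp [Function.updateFinset, hi]

/-- vectors vanishing on `I` -/
def vanish {n : ℕ} (I : Finset (Fin n)) : Submodule ℝ (Fin n → ℝ) where
  carrier := {z | ∀ i ∈ I, z i = 0}
  add_mem' := by intro a b ha hb i hi; simp [ha i hi, hb i hi]
  zero_mem' := by intro i _; rfl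
  smul_mem' := by intro c a ha i hi; simp [ha i hi]

lemma mem_vanish {n : ℕ} {I : Finset (Fin n)} {z : Fin n → ℝ} :
    z ∈ vanish I ↔ ∀ i ∈ I, z i = 0 := Iff.rfl

lemma link {n : ℕ} (A : (Fin n → ℝ) ≃ₗ[ℝ] Eucl n) (I : Finset (Fin n)) :
    ∃ H : Submodule ℝ (Eucl n), Module.finrank ℝ H = I.card ∧ ∃ c : NNReal, c ≠ 0 ∧
      ∀ F : Eucl n → ℝ≥0∞, AI I (fun x => F (A x)) =
        c * ∫⁻ y : H, ⨆ z : Hᗮ, F ((y : Eucl n) + (z : Eucl n)) := by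
  set W : Submodule ℝ (Eucl n) := (vanish I).map (A : (Fin n → ℝ) →ₗ[ℝ] Eucl n) with hW
  set H : Submodule ℝ (Eucl n) := Wᗮ with hH
  have hHW : Hᗮ = W := Submodule.orthogonal_orthogonal W
  have hmemW : ∀ v, v ∈ Hᗮ ↔ ∀ i ∈ I, (A.symm v) i = 0 := by
    intro v
    rw [hHW, hW, Submodule.mem_map]
    constructor
    · rintro ⟨z, hz, rfl⟩
      have : A.symm ((A : (Fin n → ℝ) →ₗ[ℝ] Eucl n) z) = z := A.symm_apply_apply z
      rw [this]; exact hz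
    · intro h
      exact ⟨A.symm v, h, A.apply_symm_apply v⟩
  set T₀ : (I → ℝ) →ₗ[ℝ] H := (H.orthogonalProjectionOnto : Eucl n →ₗ[ℝ] H) ∘ₗ
    (A : (Fin n → ℝ) →ₗ[ℝ] Eucl n) ∘ₗ extz I with hT₀
  have hT : ∀ y, A (extz I y) - (T₀ y : Eucl n) ∈ Hᗮ := by
    intro y
    exact Submodule.sub_starProjection_mem_orthogonal (K := H) (A (extz I y))
  have hextz : ∀ y (i : I), extz I y i = y i := by
    intro y i
    change Function.updateFinset (0 : Fin n → ℝ) I y (i : Fin n) = y i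
    simp [Function.updateFinset]
  have hinj : Function.Injective T₀ := by
    rw [← LinearMap.ker_eq_bot, LinearMap.ker_eq_bot']
    intro y hy
    have h1 := hT y
    rw [hy] at h1
    simp only [ZeroMemClass.coe_zero, sub_zero] at h1
    rw [hmemW] at h1
    ext i
    have h2 := h1 i i.2
    rw [A.symm_apply_apply, hextz] at h2
    simpa using h2
  have hsurj : Function.Surjective T₀ := by
    intro h
    refine ⟨fun i => A.symm h i, ?_⟩
    set y : I → ℝ := fun i => A.symm h i with hy
    have h1 : A (extz I y) - (h : Eucl n) ∈ Hᗮ := by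
      rw [hmemW]
      intro i hi
      rw [map_sub, A.symm_apply_apply, Pi.sub_apply, hextz y ⟨i, hi⟩, hy]
      simp
    have h2 := Submodule.sub_mem _ h1 (hT y)
    have h3 : ((T₀ y - h : H) : Eucl n) ∈ Hᗮ := by
      have e : ((T₀ y - h : H) : Eucl n) = A (extz I y) - (h : Eucl n) - (A (extz I y) - (T₀ y : Eucl n)) := by
        push_cast; abel
      rw [e]; exact h2
    have h4 : ((T₀ y - h : H) : Eucl n) = 0 := by
      have := Submodule.mem_inf.mpr ⟨(T₀ y - h : H).2, h3⟩
      rw [Submodule.inf_orthogonal_eq_bot] at this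
      simpa using this
    exact sub_eq_zero.mp (Subtype.ext h4)
  set T : (I → ℝ) ≃ₗ[ℝ] H := LinearEquiv.ofBijective T₀ ⟨hinj, hsurj⟩ with hTdef
  have hTT : ∀ y, T y = T₀ y := fun y => rfl
  set Tc : (I → ℝ) ≃L[ℝ] H := T.toContinuousLinearEquiv with hTc
  obtain ⟨c, hc0, hmap⟩ : ∃ c : NNReal, c ≠ 0 ∧ Measure.map Tc volume = c • (volume : Measure H) :=
    ⟨_, (Measure.addHaarScalarFactor_pos_of_isAddHaarMeasure _ _).ne',
      Measure.isAddLeftInvariant_eq_smul (Measure.map Tc volume) (volume : Measure H)⟩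
  refine ⟨H, ?_, c, hc0, ?_⟩
  · rw [← T.finrank_eq]; simp
  · intro F
    have e1 : AI I (fun x => F (A x)) =
        ∫⁻ y : I → ℝ, ⨆ z : Hᗮ, F ((Tc y : Eucl n) + (z : Eucl n)) := by
      rw [AI_eq]
      refine lintegral_congr fun y => ?_
      change _ = ⨆ z : Hᗮ, F ((T₀ y : Eucl n) + (z : Eucl n))
      unfold supMarg
      apply le_antisymm
      · refine iSup_le fun z => ?_
        refine le_iSup_of_le ⟨A (Iᶜ.piecewise z (extz I y)) - (T₀ y : Eucl n), ?_⟩ (le_of_eq ?_)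
        · have : A (Iᶜ.piecewise z (extz I y)) - (T₀ y : Eucl n) =
            (A (Iᶜ.piecewise z (extz I y)) - A (extz I y)) + (A (extz I y) - (T₀ y : Eucl n)) := by abel
          rw [this]
          refine Submodule.add_mem _ ?_ (hT y)
          rw [hmemW]
          intro i hi
          rw [← map_sub, A.symm_apply_apply]
          simp [hi]
        · congr 1
          simp only [add_sub_cancel]; rfl
      · refine iSup_le fun w => ?_
        refine le_iSup_of_le (A.symm ((T₀ y : Eucl n) + (w : Eucl n))) (le_of_eq ?_)
        have : Iᶜ.piecewise (A.symm ((T₀ y : Eucl n) + (w : Eucl n))) (extz I y) =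
            A.symm ((T₀ y : Eucl n) + (w : Eucl n)) := by
          ext i
          by_cases hi : i ∈ I
          · have h1 := Submodule.sub_mem _ w.2 (hT y)
            rw [hmemW] at h1
            have h2 := h1 i hi
            have e : (w : Eucl n) - (A (extz I y) - (T₀ y : Eucl n)) =
              ((T₀ y : Eucl n) + (w : Eucl n)) - A (extz I y) := by abel
            rw [e, map_sub, A.symm_apply_apply, Pi.sub_apply] at h2
            simp only [Finset.mem_compl, hi, not_true_eq_false, not_false_eq_true,
              Finset.piecewise_eq_of_notMem]
            linarith
          · simp [hi]
        change _ = F (A (Iᶜ.piecewise _ (extz I y)))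
        rw [this, A.apply_symm_apply]
    rw [e1]
    have e2 := (Tc.toHomeomorph.measurableEmbedding.lintegral_map
      (fun h : H => ⨆ z : Hᗮ, F ((h : Eucl n) + (z : Eucl n))) (μ := volume))
    have e3 : ∫⁻ y : I → ℝ, ⨆ z : Hᗮ, F ((Tc y : Eucl n) + (z : Eucl n)) =
      ∫⁻ h : H, ⨆ z : Hᗮ, F ((h : Eucl n) + (z : Eucl n)) ∂(Measure.map Tc volume) := e2.symm
    rw [e3, hmap, lintegral_smul_measure, ENNReal.smul_def, smul_eq_mul]

lemma projL1_le {n : ℕ} (f : Eucl n → ℝ) (hf : ∀ x, 0 ≤ f x) (H : Submodule ℝ (Eucl n)) :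
    ENNReal.ofReal (projL1 f H) ≤
      ∫⁻ y : H, ⨆ z : Hᗮ, ENNReal.ofReal (f ((y : Eucl n) + (z : Eucl n))) := by
  unfold projL1
  have hpt : ∀ y : H, ENNReal.ofReal (⨆ z : Hᗮ, f ((y : Eucl n) + (z : Eucl n))) ≤
      ⨆ z : Hᗮ, ENNReal.ofReal (f ((y : Eucl n) + (z : Eucl n))) := by
    intro y
    set S := ⨆ z : Hᗮ, ENNReal.ofReal (f ((y : Eucl n) + (z : Eucl n))) with hS
    by_cases htop : S = ∞
    · rw [htop]; exact le_top
    · refine ENNReal.ofReal_le_of_le_toReal (ciSup_le fun z => ?_)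
      refine (ENNReal.ofReal_le_iff_le_toReal htop).mp ?_
      exact le_iSup (fun z : Hᗮ => ENNReal.ofReal (f ((y : Eucl n) + (z : Eucl n)))) z
  by_cases hIntg : Integrable (fun y : H => ⨆ z : Hᗮ, f ((y : Eucl n) + (z : Eucl n)))
  · rw [ofReal_integral_eq_lintegral_ofReal hIntg
      (Filter.Eventually.of_forall fun y => Real.iSup_nonneg fun z => hf _)]
    exact lintegral_mono hpt
  · rw [integral_undef hIntg]; simp

lemma supProj_LC {n : ℕ} {F : Eucl n → ℝ≥0∞} (hF : LC F) (H : Submodule ℝ (Eucl n)) :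
    LC (fun y : H => ⨆ z : Hᗮ, F ((y : Eucl n) + (z : Eucl n))) := by
  intro x y a b ha hb hab
  simp only
  rw [← ENNReal.orderIsoRpow_apply a ha, ← ENNReal.orderIsoRpow_apply b hb, OrderIso.map_iSup,
    OrderIso.map_iSup, ENNReal.iSup_mul]
  refine iSup_le fun u => ?_
  rw [ENNReal.mul_iSup]
  refine iSup_le fun w => ?_
  simp only [ENNReal.orderIsoRpow_apply]
  refine (hF _ _ a b ha hb hab).trans (le_iSup_of_le (a • u + b • w) (le_of_eq ?_))
  congr 1; push_cast; simp only [smul_add]; abel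

lemma LC.aemeasurable {E : Type*} [NormedAddCommGroup E] [NormedSpace ℝ E] [MeasurableSpace E]
    [BorelSpace E] [FiniteDimensional ℝ E] (μ : Measure E) [μ.IsAddHaarMeasure] {F : E → ℝ≥0∞}
    (hF : LC F) : AEMeasurable F μ := by
  apply NullMeasurable.aemeasurable
  have : @Measurable (NullMeasurableSpace E μ) _ _ _ F :=
    measurable_of_Ioi fun c => (hF.convex_lt c).nullMeasurableSet μ
  exact fun s hs => this hs

lemma le_projL1 {n : ℕ} (f : Eucl n → ℝ) (hf : ∀ x, 0 ≤ f x) (M : ℝ) (hM : ∀ x, f x ≤ M)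
    (hLC : LC (fun x => ENNReal.ofReal (f x))) (H : Submodule ℝ (Eucl n))
    (hfin : ∫⁻ y : H, ⨆ z : Hᗮ, ENNReal.ofReal (f ((y : Eucl n) + (z : Eucl n))) ≠ ∞) :
    ∫⁻ y : H, ⨆ z : Hᗮ, ENNReal.ofReal (f ((y : Eucl n) + (z : Eucl n))) ≤
      ENNReal.ofReal (projL1 f H) := by
  unfold projL1
  have hbdd : ∀ y : H, BddAbove (Set.range fun z : Hᗮ => f ((y : Eucl n) + (z : Eucl n))) :=
    fun y => ⟨M, by rintro _ ⟨z, rfl⟩; exact hM _⟩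
  have hmeas := (supProj_LC hLC H).aemeasurable (volume : Measure H)
  have heq : ∀ y : H, (⨆ z : Hᗮ, f ((y : Eucl n) + (z : Eucl n))) =
      (⨆ z : Hᗮ, ENNReal.ofReal (f ((y : Eucl n) + (z : Eucl n)))).toReal := by
    intro y
    rw [ENNReal.toReal_iSup (fun z => ENNReal.ofReal_ne_top)]
    congr 1; ext z; rw [ENNReal.toReal_ofReal (hf _)]
  have hle : ∀ y : H, (⨆ z : Hᗮ, ENNReal.ofReal (f ((y : Eucl n) + (z : Eucl n)))) ≠ ∞ := by
    intro y
    refine ne_top_of_le_ne_top ENNReal.ofReal_ne_top (iSup_le fun z => ?_) (b := ENNReal.ofReal M)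
    exact ENNReal.ofReal_le_ofReal (hM _)
  simp_rw [heq]
  rw [integral_toReal hmeas (Filter.Eventually.of_forall fun y => (hle y).lt_top),
    ENNReal.ofReal_toReal hfin]


lemma MemQ0.LC_ofReal {n : ℕ} {f : Eucl n → ℝ} (hf : MemQ0 f) :
    LC (fun x => ENNReal.ofReal (f x)) := by
  intro x y a b ha hb hab
  have h := hf.2.1 x y a ha (by linarith)
  have hb' : 1 - a = b := by linarith
  rw [hb'] at h
  simp only
  rw [ENNReal.ofReal_rpow_of_nonneg (hf.1 x) ha.le, ENNReal.ofReal_rpow_of_nonneg (hf.1 y) hb.le,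
    ← ENNReal.ofReal_mul (Real.rpow_nonneg (hf.1 x) _)]
  exact ENNReal.ofReal_le_ofReal h

/-- the function in coordinates -/
def coordF {n : ℕ} (f : Eucl n → ℝ) (x : Fin n → ℝ) : ℝ≥0∞ :=
  ENNReal.ofReal (f ((WithLp.linearEquiv 2 ℝ (Fin n → ℝ)).symm x))

lemma MemQ0.meas {n : ℕ} {f : Eucl n → ℝ} (hf : MemQ0 f) : Measurable f := hf.2.2.1.measurable

lemma toLp_meas {n : ℕ} : Measurable (fun x : Fin n → ℝ =>
    ((WithLp.linearEquiv 2 ℝ (Fin n → ℝ)).symm x : Eucl n)) :=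
  (PiLp.volume_preserving_toLp (Fin n)).measurable

lemma coordF_lint {n : ℕ} (f : Eucl n → ℝ) (hf : Measurable f) (p : ℝ) :
    ∫⁻ x, coordF f x ^ p = ∫⁻ x, ENNReal.ofReal (f x) ^ p :=
  (PiLp.volume_preserving_toLp (Fin n)).lintegral_comp (f := fun x => ENNReal.ofReal (f x) ^ p)
    (hf.ennreal_ofReal.pow_const p)

lemma mat_lint {n : ℕ} (L : Matrix (Fin n) (Fin n) ℝ) (hL0 : L.det ≠ 0) (h : (Fin n → ℝ) → ℝ≥0∞)
    (hm : Measurable h) :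
    ∫⁻ y, h (L.mulVec y) = ENNReal.ofReal |L.det⁻¹| * ∫⁻ y, h y := by
  have e1 : ∫⁻ y, h (L.mulVec y) = ∫⁻ z, h z ∂(Measure.map (Matrix.toLin' L) volume) := by
    rw [lintegral_map hm (LinearMap.continuous_of_finiteDimensional _).measurable]
    rfl
  rw [e1, Real.map_matrix_volume_pi_eq_smul_volume_pi hL0, lintegral_smul_measure, smul_eq_mul]

lemma final_algebra {n k : ℕ} (hk : 1 ≤ k) (hkn : k < n) (X Y d : ℝ≥0∞) (τ : ℝ) (hτ : 0 < τ)
    (hY0 : Y ≠ 0) (hY1 : Y ≠ ∞) (hd0 : d ≠ 0) (hd1 : d ≠ ∞)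
    (h1 : (d * X) ^ ((k:ℝ) / n) * (ENNReal.ofReal τ ^ ((k:ℝ) / n)) ^ (((n:ℝ) - k) / k) ≤
      ENNReal.ofReal (Real.exp 1 ^ (n - k)) * (d * Y))
    (h2 : d * Y ≤ ENNReal.ofReal ((16 * √n) ^ n * τ)) :
    X ^ ((k:ℝ) / n) ≤ ENNReal.ofReal ((16 * Real.exp 1 * √n) ^ (n - k)) * Y ^ ((k:ℝ) / n) := by
  have hkp : (0:ℝ) < k := by exact_mod_cast hk
  have hnp : (0:ℝ) < n := by exact_mod_cast (by omega : 0 < n)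
  have hkn' : (k:ℝ) < n := by exact_mod_cast hkn
  have hj : 0 < ((n:ℝ) - k) / n := div_pos (by linarith) hnp
  have hdY0 : d * Y ≠ 0 := mul_ne_zero hd0 hY0
  have hdY1 : d * Y ≠ ∞ := ENNReal.mul_ne_top hd1 hY1
  rw [← ENNReal.rpow_mul, show (k:ℝ) / n * (((n:ℝ) - k) / k) = ((n:ℝ) - k) / n by field_simp] at h1
  have h3 : (d * Y) ^ (((n:ℝ) - k) / n) ≤
      ENNReal.ofReal ((16 * √n) ^ (n - k)) * ENNReal.ofReal τ ^ (((n:ℝ) - k) / n) := by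
    refine (ENNReal.rpow_le_rpow h2 hj.le).trans (le_of_eq ?_)
    rw [ENNReal.ofReal_mul (by positivity), ENNReal.mul_rpow_of_nonneg _ _ hj.le,
      ENNReal.ofReal_rpow_of_nonneg (by positivity) hj.le]
    congr 2
    rw [← Real.rpow_natCast, ← Real.rpow_natCast, ← Real.rpow_mul (by positivity),
      Nat.cast_sub hkn.le]
    congr 1; field_simp
  set E := ENNReal.ofReal (Real.exp 1 ^ (n - k))
  set S := ENNReal.ofReal ((16 * √n) ^ (n - k))
  have hc : ENNReal.ofReal ((16 * Real.exp 1 * √n) ^ (n - k)) = S * E := by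
    rw [← ENNReal.ofReal_mul (by positivity), ← mul_pow]; congr 2; ring
  have hP0 : (d * Y) ^ (((n:ℝ) - k) / n) ≠ 0 := by
    simp [ENNReal.rpow_eq_zero_iff, hd0, hY0, hdY1, hj.le]
  have hP1 : (d * Y) ^ (((n:ℝ) - k) / n) ≠ ∞ := ENNReal.rpow_ne_top_of_nonneg hj.le hdY1
  have h4 : (d * X) ^ ((k:ℝ) / n) ≤ S * E * (d * Y) ^ ((k:ℝ) / n) := by
    rw [← ENNReal.mul_le_mul_iff_left hP0 hP1]
    calc (d * X) ^ ((k:ℝ) / n) * (d * Y) ^ (((n:ℝ) - k) / n)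
        ≤ (d * X) ^ ((k:ℝ) / n) * (S * ENNReal.ofReal τ ^ (((n:ℝ) - k) / n)) := by gcongr
      _ = S * ((d * X) ^ ((k:ℝ) / n) * ENNReal.ofReal τ ^ (((n:ℝ) - k) / n)) := by ring
      _ ≤ S * (E * (d * Y)) := by gcongr
      _ = S * E * ((d * Y) ^ ((k:ℝ) / n) * (d * Y) ^ (((n:ℝ) - k) / n)) := by
          rw [← ENNReal.rpow_add_of_nonneg _ _ (by positivity) hj.le,
            show (k:ℝ) / n + ((n:ℝ) - k) / n = 1 by field_simp; ring, ENNReal.rpow_one]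
          ring
      _ = _ := by ring
  rw [ENNReal.mul_rpow_of_nonneg _ _ (by positivity), ENNReal.mul_rpow_of_nonneg _ _ (by positivity)]
    at h4
  have hq0 : d ^ ((k:ℝ) / n) ≠ 0 := by simp [ENNReal.rpow_eq_zero_iff, hd0, hd1]
  have hq1 : d ^ ((k:ℝ) / n) ≠ ∞ := ENNReal.rpow_ne_top_of_nonneg (by positivity) hd1
  rw [hc, ← ENNReal.mul_le_mul_iff_right hq0 hq1]
  refine h4.trans (le_of_eq (by ring))

lemma lpNorm_eq {n k : ℕ} (hk : 1 ≤ k) {f : Eucl n → ℝ} (hf : MemQ0 f) :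
    lpNorm ((n:ℝ) / k) f = ((∫⁻ x, coordF f x ^ ((n:ℝ) / k)) ^ ((k:ℝ) / n)).toReal := by
  change (∫ x, f x ^ ((n:ℝ) / k)) ^ (1 / ((n:ℝ) / k)) = _
  rw [coordF_lint f hf.meas, one_div_div, ← ENNReal.toReal_rpow]
  congr 1
  rw [integral_eq_lintegral_of_nonneg_ae
    (Filter.Eventually.of_forall fun x => Real.rpow_nonneg (hf.1 x) _)
    (hf.meas.pow_const _).aestronglyMeasurable]
  congr 1
  refine lintegral_congr fun x => ?_
  rw [ENNReal.ofReal_rpow_of_nonneg (hf.1 x) (by positivity)]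

lemma MemQ0.coord {n : ℕ} {f : Eucl n → ℝ} (hf : MemQ0 f) :
    LC (coordF f) ∧ Measurable (coordF f) ∧ ∫⁻ x, coordF f x ≠ 0 ∧ ∫⁻ x, coordF f x ≠ ∞ := by
  have hm : Measurable (coordF f) := hf.meas.ennreal_ofReal.comp toLp_meas
  have e : ∫⁻ x, coordF f x = ENNReal.ofReal (∫ x, f x) := by
    rw [ofReal_integral_eq_lintegral_ofReal hf.2.2.2.1 (Filter.Eventually.of_forall hf.1)]
    simpa using coordF_lint f hf.meas 1
  refine ⟨hf.LC_ofReal.comp_linear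
    ((WithLp.linearEquiv 2 ℝ (Fin n → ℝ)).symm : (Fin n → ℝ) →ₗ[ℝ] Eucl n), hm, ?_, ?_⟩
  · rw [e]; simpa using hf.2.2.2.2
  · rw [e]; exact ENNReal.ofReal_ne_top

lemma AI_compare {n k : ℕ} (hk1 : 1 ≤ k) (hkn : k < n) {f₁ f₂ : Eucl n → ℝ} (hf₁ : MemQ0 f₁)
    (hf₂ : MemQ0 f₂)
    (hcond : ∀ H : Submodule ℝ (Eucl n), Module.finrank ℝ H = k → projL1 f₁ H ≤ projL1 f₂ H)
    (L : Matrix (Fin n) (Fin n) ℝ) (hL : L.det ≠ 0)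
    (hF : LC (fun y => coordF f₁ (L.mulVec y))) (hm : Measurable (fun y => coordF f₁ (L.mulVec y)))
    (h0 : ∫⁻ y, coordF f₁ (L.mulVec y) ≠ 0) (hi : ∫⁻ y, coordF f₁ (L.mulVec y) ≠ ∞)
    (I : Finset (Fin n)) (hI : I.card = k) :
    AI I (fun y => coordF f₁ (L.mulVec y)) ≤ AI I (fun y => coordF f₂ (L.mulVec y)) := by
  obtain ⟨hLC, hcm, hc0, hc1⟩ := hf₁.coord
  obtain ⟨M, hM1, _, hM⟩ := hLC.bounded hcm hc0 hc1
  have hM' : ∀ x, f₁ x ≤ M.toReal := by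
    intro x
    have := hM ((WithLp.linearEquiv 2 ℝ (Fin n → ℝ)) x)
    unfold coordF at this
    rw [LinearEquiv.symm_apply_apply] at this
    exact (ENNReal.ofReal_le_iff_le_toReal hM1).mp this
  set A : (Fin n → ℝ) ≃ₗ[ℝ] Eucl n :=
    (LinearEquiv.ofIsUnitDet (f := Matrix.toLin' L) (v := Pi.basisFun ℝ (Fin n))
      (v' := Pi.basisFun ℝ (Fin n))
      (by rw [LinearMap.toMatrix_eq_toMatrix', LinearMap.toMatrix'_toLin']
          exact isUnit_iff_ne_zero.mpr hL)).trans
      (WithLp.linearEquiv 2 ℝ (Fin n → ℝ)).symm with hA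
  have hAx : ∀ f : Eucl n → ℝ, (fun y => coordF f (L.mulVec y)) =
      fun y => (fun x => ENNReal.ofReal (f x)) (A y) := fun f => rfl
  have hfin := AI_finite hk1 hkn hF hm h0 hi I hI
  obtain ⟨H, hHk, c, hc, hlink⟩ := link A I
  have e₁ : AI I (fun y => coordF f₁ (L.mulVec y)) =
      c * ∫⁻ y : H, ⨆ z : Hᗮ, ENNReal.ofReal (f₁ ((y : Eucl n) + (z : Eucl n))) :=
    hlink (fun x => ENNReal.ofReal (f₁ x))
  have e₂ : AI I (fun y => coordF f₂ (L.mulVec y)) =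
      c * ∫⁻ y : H, ⨆ z : Hᗮ, ENNReal.ofReal (f₂ ((y : Eucl n) + (z : Eucl n))) :=
    hlink (fun x => ENNReal.ofReal (f₂ x))
  rw [e₁] at hfin
  rw [e₁, e₂]
  refine mul_le_mul_right ?_ _
  have hfin' : ∫⁻ y : H, ⨆ z : Hᗮ, ENNReal.ofReal (f₁ ((y : Eucl n) + (z : Eucl n))) ≠ ∞ := by
    intro h
    rw [h, ENNReal.mul_top (by exact_mod_cast hc)] at hfin
    exact hfin rfl
  refine (le_projL1 f₁ hf₁.1 _ hM' hf₁.LC_ofReal H hfin').trans ?_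
  exact (ENNReal.ofReal_le_ofReal (hcond H (hHk.trans hI))).trans (projL1_le f₂ hf₂.1 H)

/-- **The functional Shephard problem**, `L^{n/k}`-form (Corollary 4.8, first bound). -/
theorem functional_shephard_lp (n k : ℕ) (hn : 2 ≤ n) (hk1 : 1 ≤ k) (hk2 : k ≤ n - 1)
    (f₁ f₂ : Eucl n → ℝ) (hf₁ : MemQ0 f₁) (hf₂ : MemQ0 f₂)
    (hcond : ∀ H : Submodule ℝ (Eucl n), Module.finrank ℝ H = k →
      projL1 f₁ H ≤ projL1 f₂ H) :
    lpNorm ((n : ℝ) / k) f₁ ≤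
      (16 * Real.exp 1 * Real.sqrt n) ^ (n - k) * lpNorm ((n : ℝ) / k) f₂ := by
  have hkn : k < n := by omega
  have hkp : (0:ℝ) < k := by exact_mod_cast hk1
  have hnp : (0:ℝ) < n := by exact_mod_cast (by omega : 0 < n)
  have hkn' : (k:ℝ) < n := by exact_mod_cast hkn
  have hp : 1 ≤ (n:ℝ)/k := by rw [le_div_iff₀ hkp]; linarith
  obtain ⟨hLC1, hm1, h10, h11⟩ := hf₁.coord
  obtain ⟨hLC2, hm2, h20, h21⟩ := hf₂.coord
  obtain ⟨M, hM1, _, hM⟩ := hLC2.bounded hm2 h20 h21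
  set X := ∫⁻ x, coordF f₁ x ^ ((n:ℝ) / k) with hX
  set Y := ∫⁻ x, coordF f₂ x ^ ((n:ℝ) / k) with hY
  have hpm2 : Measurable (fun x => coordF f₂ x ^ ((n:ℝ) / k)) := hm2.pow_const _
  have hpm1 : Measurable (fun x => coordF f₁ x ^ ((n:ℝ) / k)) := hm1.pow_const _
  have hY1 : Y ≠ ∞ := pow_int_finite hM hM1 h21 _ hp
  have hY0 : Y ≠ 0 := by
    intro h
    apply h20
    rw [hY, lintegral_eq_zero_iff hpm2] at h
    rw [lintegral_eq_zero_iff hm2]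
    filter_upwards [h] with x hx
    simp only [Pi.zero_apply] at hx ⊢
    rcases ENNReal.rpow_eq_zero_iff.mp hx with h | h
    · exact h.1
    · linarith [h.2]
  obtain ⟨τ, L, p, hτ, hL, hcube, hVol⟩ := cube hn (hLC2.rpow (p := (n:ℝ)/k) (by linarith)) hpm2 hY0 hY1
  set d := ENNReal.ofReal |L.det⁻¹| with hd
  have hd0 : d ≠ 0 := by
    rw [hd]; simp [hL]
  have hd1 : d ≠ ∞ := ENNReal.ofReal_ne_top
  have hLm : Measurable (fun y : Fin n → ℝ => L.mulVec y) :=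
    (LinearMap.continuous_of_finiteDimensional (Matrix.toLin' L)).measurable
  have hF1 : LC (fun y => coordF f₁ (L.mulVec y)) := hLC1.comp_linear (Matrix.toLin' L)
  have hF2 : LC (fun y => coordF f₂ (L.mulVec y)) := hLC2.comp_linear (Matrix.toLin' L)
  have hi1 := mat_lint L hL _ hm1
  have hi2 := mat_lint L hL _ hm2
  have hi3 := mat_lint L hL _ hpm1
  have hi4 := mat_lint L hL _ hpm2
  rw [hi4] at hVol
  have a0 : ∫⁻ y, coordF f₁ (L.mulVec y) ≠ 0 := by rw [hi1]; exact mul_ne_zero hd0 h10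
  have a1 : ∫⁻ y, coordF f₁ (L.mulVec y) ≠ ∞ := by rw [hi1]; exact ENNReal.mul_ne_top hd1 h11
  have b0 : ∫⁻ y, coordF f₂ (L.mulVec y) ≠ 0 := by rw [hi2]; exact mul_ne_zero hd0 h20
  have b1 : ∫⁻ y, coordF f₂ (L.mulVec y) ≠ ∞ := by rw [hi2]; exact ENNReal.mul_ne_top hd1 h21
  have hcore := core hk1 hkn hF1 (hm1.comp hLm) a0 a1 hF2 (hm2.comp hLm) b0 b1 p
    (ENNReal.ofReal τ ^ ((k:ℝ) / n)) (fun y hy => by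
      have h := ENNReal.rpow_le_rpow (hcube y hy) (show 0 ≤ (k:ℝ)/n by positivity)
      refine h.trans (le_of_eq ?_)
      rw [← ENNReal.rpow_mul, show (n:ℝ)/k * (k/n) = 1 by field_simp, ENNReal.rpow_one])
    (fun I hI => AI_compare hk1 hkn hf₁ hf₂ hcond L hL hF1 (hm1.comp hLm) a0 a1 I
      (Finset.mem_powersetCard.mp hI).2)
  rw [hi3, hi4] at hcore
  have hfin := final_algebra hk1 hkn X Y d τ hτ hY0 hY1 hd0 hd1 hcore hVol
  rw [lpNorm_eq hk1 hf₁, lpNorm_eq hk1 hf₂, ← hX, ← hY]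
  have h := ENNReal.toReal_mono (ENNReal.mul_ne_top ENNReal.ofReal_ne_top
    (ENNReal.rpow_ne_top_of_nonneg (by positivity) hY1)) hfin
  rwa [ENNReal.toReal_mul, ENNReal.toReal_ofReal (by positivity)] at h
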